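/- arXiv:1808.10587 — 3 statements merged into one kernel-verified Lean document; each statement's English description precedes it below -/
import Mathlib

section
/- (Completeness of the dual invariants.) Let (v₀¹, v₁¹) and (v₀², v₁²) be two arc-length parametrized non-cylindrical ruled surfaces on the same interval I, with invariants κ₁¹, τ₀¹, τ₁¹ and κ₁², τ₀², τ₁² respectively. If κ₁¹(s) = κ₁²(s), τ₀¹(s) = τ₀²(s) and τ₁¹(s) = τ₁²(s) for all s ∈ I, then there exist a rotation A ∈ SO(3) (a linear isometry of ℝ³ with determinant 1) and a vector b ∈ ℝ³ such that for all s ∈ I: v₀²(s) = A(v₀¹(s)) and v₁²(s) = A(v₁¹(s)) + b × A(v₀¹(s)). In particular, the Euclidean motion x ↦ A x + b carries every ruling of the first ruled surface onto the corresponding ruling of the second. -/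
noncomputable section
open scoped RealInnerProductSpace

/-- Euclidean 3-space `ℝ³`. -/
abbrev E3 : Type := EuclideanSpace ℝ (Fin 3)

/-- The cross product on `E3`. -/
def cross (u v : E3) : E3 :=
  (WithLp.equiv 2 (Fin 3 → ℝ)).symm
    ![u 1 * v 2 - u 2 * v 1, u 2 * v 0 - u 0 * v 2, u 0 * v 1 - u 1 * v 0]

/-- Determinant of the 3×3 matrix with columns `u`, `v`, `w`. -/
def det3 (u v w : E3) : ℝ :=
  Matrix.det !![u 0, v 0, w 0; u 1, v 1, w 1; u 2, v 2, w 2]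

namespace Ruled

/-- The director curve `e = v₀`. -/
def e (v₀ : ℝ → E3) : ℝ → E3 := v₀

/-- The base curve `r = v₀ × v₁`. -/
def r (v₀ v₁ : ℝ → E3) : ℝ → E3 := fun s => cross (v₀ s) (v₁ s)

/-- The parametrization `F(s,t) = r(s) + t • e(s)` of the ruled surface. -/
def F (v₀ v₁ : ℝ → E3) (s t : ℝ) : E3 := r v₀ v₁ s + t • v₀ s

/-- `n₀ = v₀'`. -/
def n₀ (v₀ : ℝ → E3) : ℝ → E3 := fun s => deriv v₀ s

/-- `κ₁ = ⟪v₀', v₁'⟫`, the ε-part of the dual curvature. -/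
def κ₁ (v₀ v₁ : ℝ → E3) : ℝ → ℝ := fun s => ⟪deriv v₀ s, deriv v₁ s⟫

/-- `n₁ = v₁' - κ₁ • v₀'`. -/
def n₁ (v₀ v₁ : ℝ → E3) : ℝ → E3 := fun s => deriv v₁ s - κ₁ v₀ v₁ s • deriv v₀ s

/-- `t₀ = v₀ × n₀`. -/
def t₀ (v₀ : ℝ → E3) : ℝ → E3 := fun s => cross (v₀ s) (n₀ v₀ s)

/-- `t₁ = v₀ × n₁ + v₁ × n₀`. -/
def t₁ (v₀ v₁ : ℝ → E3) : ℝ → E3 :=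
  fun s => cross (v₀ s) (n₁ v₀ v₁ s) + cross (v₁ s) (n₀ v₀ s)

/-- `τ₀ = ⟪n₀', t₀⟫`, the real part of the dual torsion. -/
def τ₀ (v₀ : ℝ → E3) : ℝ → ℝ := fun s => ⟪deriv (n₀ v₀) s, t₀ v₀ s⟫

/-- `τ₁ = ⟪n₀', t₁⟫ + ⟪n₁', t₀⟫`, the ε-part of the dual torsion. -/
def τ₁ (v₀ v₁ : ℝ → E3) : ℝ → ℝ :=
  fun s => ⟪deriv (n₀ v₀) s, t₁ v₀ v₁ s⟫ + ⟪deriv (n₁ v₀ v₁) s, t₀ v₀ s⟫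

/-- The striction curve `σ(s) = r(s) - ⟪r'(s), e'(s)⟫ • e(s)`. -/
def strict (v₀ v₁ : ℝ → E3) : ℝ → E3 :=
  fun s => r v₀ v₁ s - ⟪deriv (r v₀ v₁) s, deriv (e v₀) s⟫ • e v₀ s

end Ruled

open Ruled

/-!
Let `σ` be the striction curve. It meets every ruling and satisfies `σ' ⊥ n₀`, so the moments of
the dual frame are `v₁ = σ × v₀`, `n₁ = σ × n₀`, `t₁ = σ × t₀`. Through these identities the
invariants become the coefficients of

* `v₀' = n₀`, `n₀' = -v₀ + τ₀ t₀`, `t₀' = -τ₀ n₀`,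
* `σ' = τ₁ v₀ + κ₁ t₀`.

The first line is a linear system with skew-symmetric coefficients, so a rotation `A` matching the
frames of the two surfaces at one parameter matches them at all parameters. By the second line `A`
then matches the velocities of the striction curves, so these differ by a translation `b` after
applying `A`. The moments `σ × v₀` transform accordingly, and a ruling is the set of points `p` with
`p × v₀ = v₁`.
-/

open scoped Matrix Topology

namespace E3

variable (u v w x : E3)

lemma cross_eq_crossProduct : cross u v = WithLp.toLp 2 (u.ofLp ⨯₃ v.ofLp) := rfl

lemma inner_eq_dotProduct : ⟪u, v⟫ = u.ofLp ⬝ᵥ v.ofLp := by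
  rw [EuclideanSpace.inner_eq_star_dotProduct, star_trivial, dotProduct_comm]

lemma cross_add_left : cross (u + v) w = cross u w + cross v w := by
  simp [cross_eq_crossProduct]

lemma cross_add_right : cross u (v + w) = cross u v + cross u w := by
  simp [cross_eq_crossProduct]

lemma cross_smul_left (c : ℝ) : cross (c • u) v = c • cross u v := by
  simp [cross_eq_crossProduct]

lemma cross_smul_right (c : ℝ) : cross u (c • v) = c • cross u v := by
  simp [cross_eq_crossProduct]

lemma cross_neg_right : cross u (-v) = -cross u v := by
  simp only [cross_eq_crossProduct, WithLp.ofLp_neg, map_neg, WithLp.toLp_neg]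

lemma cross_self : cross u u = 0 := by
  simp [cross_eq_crossProduct]

lemma neg_cross : -cross u v = cross v u :=
  congrArg (WithLp.toLp 2) (cross_anticomm u.ofLp v.ofLp)

lemma inner_self_cross : ⟪u, cross u v⟫ = 0 := by
  simp [cross_eq_crossProduct, inner_eq_dotProduct]

lemma inner_cross_self : ⟪v, cross u v⟫ = 0 := by
  simp [cross_eq_crossProduct, inner_eq_dotProduct]

lemma inner_cross_rotate : ⟪u, cross v w⟫ = ⟪v, cross w u⟫ := by
  simpa only [inner_eq_dotProduct] using! triple_product_permutation u.ofLp v.ofLp w.ofLp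

lemma inner_cross_left : ⟪cross u v, w⟫ = ⟪u, cross v w⟫ := by
  rw [real_inner_comm, inner_cross_rotate]

lemma inner_cross_cross : ⟪cross u v, cross w x⟫ = ⟪u, w⟫ * ⟪v, x⟫ - ⟪u, x⟫ * ⟪v, w⟫ := by
  simpa only [inner_eq_dotProduct] using! cross_dot_cross u.ofLp v.ofLp w.ofLp x.ofLp

lemma cross_cross_eq_smul_sub_smul : cross (cross u v) w = ⟪u, w⟫ • v - ⟪v, w⟫ • u := by
  simp only [inner_eq_dotProduct, cross_eq_crossProduct, _root_.cross_cross_eq_smul_sub_smul]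
  rfl

lemma leibniz_cross : cross u (cross v w) = cross (cross u v) w + cross v (cross u w) :=
  congrArg (WithLp.toLp 2) (_root_.leibniz_cross u.ofLp v.ofLp w.ofLp)

variable {u v}

lemma cross_cross_self_of_orthogonal (hu : ‖u‖ = 1) (huv : ⟪u, v⟫ = 0) :
    cross (cross u v) u = v := by
  simp [cross_cross_eq_smul_sub_smul, real_inner_comm, hu, huv]

lemma norm_cross_of_orthonormal (hu : ‖u‖ = 1) (hv : ‖v‖ = 1) (huv : ⟪u, v⟫ = 0) :
    ‖cross u v‖ = 1 := by
  have hsq : ‖cross u v‖ ^ 2 = 1 := by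
    rw [← real_inner_self_eq_norm_sq, inner_cross_cross]
    simp [hu, hv, huv]
  exact (pow_eq_one_iff_of_nonneg (norm_nonneg _) two_ne_zero).mp hsq

lemma orthonormal_cross_frame (hu : ‖u‖ = 1) (hv : ‖v‖ = 1) (huv : ⟪u, v⟫ = 0) :
    Orthonormal ℝ ![u, v, cross u v] := by
  simp [Fin.forall_fin_succ, inner_self_cross, inner_cross_self, hu, hv, huv,
    norm_cross_of_orthonormal]

/-- The positively oriented orthonormal basis `u, v, u × v` completing an orthonormal pair
`u, v`. -/
def crossFrame (hu : ‖u‖ = 1) (hv : ‖v‖ = 1) (huv : ⟪u, v⟫ = 0) :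
    OrthonormalBasis (Fin 3) ℝ E3 :=
  OrthonormalBasis.mk (orthonormal_cross_frame hu hv huv)
    ((orthonormal_cross_frame hu hv huv).linearIndependent.span_eq_top_of_card_eq_finrank'
      (by simp)).ge

lemma coe_crossFrame (hu : ‖u‖ = 1) (hv : ‖v‖ = 1) (huv : ⟪u, v⟫ = 0) :
    ⇑(crossFrame hu hv huv) = ![u, v, cross u v] :=
  OrthonormalBasis.coe_mk _ _

lemma eq_sum_inner_crossFrame (hu : ‖u‖ = 1) (hv : ‖v‖ = 1) (huv : ⟪u, v⟫ = 0) (x : E3) :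
    x = ⟪u, x⟫ • u + ⟪v, x⟫ • v + ⟪cross u v, x⟫ • cross u v := by
  have hsum := (crossFrame hu hv huv).sum_repr' x
  rw [coe_crossFrame, Fin.sum_univ_three] at hsum
  exact hsum.symm

lemma inner_cross_eq_basisFun_det (u v w : E3) :
    ⟪u, cross v w⟫ = (EuclideanSpace.basisFun (Fin 3) ℝ).toBasis.det ![u, v, w] := by
  rw [inner_eq_dotProduct, Module.Basis.det_apply, ← Matrix.det_transpose]
  refine (triple_product_eq_det u.ofLp v.ofLp w.ofLp).trans (congrArg Matrix.det ?_)
  ext i j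
  fin_cases i <;> simp [Module.Basis.toMatrix_apply]

lemma inner_map_cross_map_map (A : E3 →ₗ[ℝ] E3) (u v w : E3) :
    ⟪A u, cross (A v) (A w)⟫ = LinearMap.det A * ⟪u, cross v w⟫ := by
  rw [inner_cross_eq_basisFun_det, inner_cross_eq_basisFun_det, ← Module.Basis.det_comp]
  congr 1
  ext i
  fin_cases i <;> rfl

lemma map_cross {A : E3 ≃ₗᵢ[ℝ] E3} (hA : LinearMap.det (A.toLinearEquiv : E3 →ₗ[ℝ] E3) = 1)
    (u v : E3) : A (cross u v) = cross (A u) (A v) := by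
  refine ext_inner_left ℝ fun y => ?_
  obtain ⟨w, rfl⟩ := A.surjective y
  have hdet := inner_map_cross_map_map (A.toLinearEquiv : E3 →ₗ[ℝ] E3) w u v
  rw [hA, one_mul] at hdet
  exact (A.inner_map_map _ _).trans hdet.symm

lemma exists_rotation_map_orthonormal_pair {u' v' : E3}
    (hu : ‖u‖ = 1) (hv : ‖v‖ = 1) (huv : ⟪u, v⟫ = 0)
    (hu' : ‖u'‖ = 1) (hv' : ‖v'‖ = 1) (huv' : ⟪u', v'⟫ = 0) :
    ∃ A : E3 ≃ₗᵢ[ℝ] E3, LinearMap.det (A.toLinearEquiv : E3 →ₗ[ℝ] E3) = 1 ∧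
      A u = u' ∧ A v = v' := by
  let A := (crossFrame hu hv huv).equiv (crossFrame hu' hv' huv') (Equiv.refl _)
  have map_frame (i : Fin 3) : A (![u, v, cross u v] i) = ![u', v', cross u' v'] i := by
    rw [← coe_crossFrame hu hv huv, ← coe_crossFrame hu' hv' huv']
    simp [A]
  have map_u : A u = u' := map_frame 0
  have map_v : A v = v' := map_frame 1
  have map_cross_uv : A (cross u v) = cross u' v' := map_frame 2
  refine ⟨A, ?_, map_u, map_v⟩
  have hdet : ⟪A (cross u v), cross (A u) (A v)⟫ = _ * ⟪cross u v, cross u v⟫ :=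
    inner_map_cross_map_map (A.toLinearEquiv : E3 →ₗ[ℝ] E3) (cross u v) u v
  rw [map_u, map_v, map_cross_uv, real_inner_self_eq_norm_sq, real_inner_self_eq_norm_sq,
    norm_cross_of_orthonormal hu hv huv, norm_cross_of_orthonormal hu' hv' huv'] at hdet
  simpa using hdet.symm

/-- The cross product as a continuous bilinear map, which gives access to the product rule. -/
def crossL : E3 →L[ℝ] E3 →L[ℝ] E3 :=
  (LinearMap.mk₂ ℝ cross cross_add_left (fun c u v => cross_smul_left u v c) cross_add_right
    (fun c u v => cross_smul_right u v c)).toContinuousBilinearMap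

lemma hasDerivAt_cross {f g : ℝ → E3} {f' g' : E3} {s : ℝ}
    (hf : HasDerivAt f f' s) (hg : HasDerivAt g g' s) :
    HasDerivAt (fun x => cross (f x) (g x)) (cross f' (g s) + cross (f s) g') s := by
  rw [add_comm]
  exact crossL.hasDerivAt_of_bilinear (fun _ => hf) (fun _ => hg)

lemma contDiffOn_cross {f g : ℝ → E3} {n : WithTop ℕ∞} {I : Set ℝ}
    (hf : ContDiffOn ℝ n f I) (hg : ContDiffOn ℝ n g I) :
    ContDiffOn ℝ n (fun x => cross (f x) (g x)) I :=
  crossL.isBoundedBilinearMap.contDiff.comp₂_contDiffOn hf hg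

end E3

section Calculus

variable {E : Type*} [NormedAddCommGroup E]

lemma differentiableAt_deriv_of_contDiffOn_two [NormedSpace ℝ E] {f : ℝ → E} {I : Set ℝ} {s : ℝ}
    (hf : ContDiffOn ℝ 2 f I) (hI : IsOpen I) (hs : s ∈ I) : DifferentiableAt ℝ (deriv f) s :=
  ((hf.deriv_of_isOpen hI (m := 1) (by norm_num)).differentiableOn one_ne_zero).differentiableAt
    (hI.mem_nhds hs)

variable [InnerProductSpace ℝ E]

lemma inner_deriv_add_inner_deriv_eq_zero {f g : ℝ → E} {f' g' : E} {c s : ℝ}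
    (hf : HasDerivAt f f' s) (hg : HasDerivAt g g' s)
    (hfg : (fun x => ⟪f x, g x⟫) =ᶠ[𝓝 s] fun _ => c) : ⟪f s, g'⟫ + ⟪f', g s⟫ = 0 :=
  (hf.inner ℝ hg).unique ((hasDerivAt_const s c).congr_of_eventuallyEq hfg)

variable {ι : Type*} [Fintype ι]

lemma sum_inner_skew_smul_eq_zero {W : Matrix ι ι ℝ} (hW : Wᵀ = -W) (x : ι → E) :
    ∑ i, ⟪x i, ∑ j, W i j • x j⟫ = 0 := by
  have hskew (i j : ι) : W j i = -W i j := congrFun (congrFun hW i) j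
  have hneg : ∑ i, ∑ j, W i j * ⟪x i, x j⟫ = -∑ i, ∑ j, W i j * ⟪x i, x j⟫ := by
    conv_lhs => rw [Finset.sum_comm]
    simp_rw [← Finset.sum_neg_distrib, ← neg_mul, ← hskew, real_inner_comm]
  simp_rw [inner_sum, real_inner_smul_right]
  linarith

/-- The sum of the `‖f i - g i‖²` is a first integral because the coefficients are skew-symmetric;
so uniqueness needs no regularity of `ω`. -/
lemma eq_of_hasDerivAt_skew_system {I : Set ℝ} {ω : ℝ → Matrix ι ι ℝ} {f g : ι → ℝ → E} {a s : ℝ}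
    (hI : IsOpen I) (hI' : I.OrdConnected) (hω : ∀ t ∈ I, (ω t)ᵀ = -ω t)
    (hf : ∀ t ∈ I, ∀ i, HasDerivAt (f i) (∑ j, ω t i j • f j t) t)
    (hg : ∀ t ∈ I, ∀ i, HasDerivAt (g i) (∑ j, ω t i j • g j t) t)
    (ha : a ∈ I) (hfg : ∀ i, f i a = g i a) (hs : s ∈ I) (i : ι) : f i s = g i s := by
  let φ : ℝ → ℝ := fun t => ∑ i, ‖f i t - g i t‖ ^ 2
  have hφ : ∀ t ∈ I, HasDerivAt φ 0 t := by
    intro t ht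
    have hdiff (i : ι) :
        HasDerivAt (fun t => f i t - g i t) (∑ j, ω t i j • (f j t - g j t)) t := by
      simpa only [smul_sub, Finset.sum_sub_distrib] using (hf t ht i).fun_sub (hg t ht i)
    refine (HasDerivAt.fun_sum fun i _ => (hdiff i).norm_sq).congr_deriv ?_
    rw [← Finset.mul_sum, sum_inner_skew_smul_eq_zero (hω t ht), mul_zero]
  have hφs : φ s = 0 := by
    rw [hI.is_const_of_deriv_eq_zero hI'.isPreconnected
      (fun t ht => (hφ t ht).differentiableAt.differentiableWithinAt)
      (fun t ht => (hφ t ht).deriv) hs ha]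
    simp [φ, hfg]
  have hterm : ‖f i s - g i s‖ ^ 2 = 0 :=
    (Finset.sum_eq_zero_iff_of_nonneg fun i _ => sq_nonneg _).mp hφs i (Finset.mem_univ i)
  simpa [sub_eq_zero] using hterm

end Calculus

namespace Ruled

/-- The oriented line with unit direction `u` and moment `v ⊥ u`; its point nearest to the origin
is `u × v`. -/
def ruling (u v : E3) : Set E3 := {p | ∃ t : ℝ, p = cross u v + t • u}

lemma mem_ruling_iff_cross_eq {u v p : E3} (hu : ‖u‖ = 1) (huv : ⟪u, v⟫ = 0) :
    p ∈ ruling u v ↔ cross p u = v := by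
  constructor
  · rintro ⟨t, rfl⟩
    rw [E3.cross_add_left, E3.cross_smul_left, E3.cross_self, smul_zero, add_zero,
      E3.cross_cross_self_of_orthogonal hu huv]
  · rintro rfl
    refine ⟨⟪p, u⟫, ?_⟩
    rw [← E3.neg_cross, E3.cross_cross_eq_smul_sub_smul, real_inner_self_eq_norm_sq, hu]
    module

lemma image_ruling {A : E3 ≃ₗᵢ[ℝ] E3} (hA : LinearMap.det (A.toLinearEquiv : E3 →ₗ[ℝ] E3) = 1)
    (b : E3) {u v : E3} (hu : ‖u‖ = 1) (huv : ⟪u, v⟫ = 0) :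
    (fun x => A x + b) '' ruling u v = ruling (A u) (A v + cross b (A u)) := by
  have hAu : ‖A u‖ = 1 := by rw [A.norm_map, hu]
  have hAuv : ⟪A u, A v + cross b (A u)⟫ = 0 := by
    rw [inner_add_right, A.inner_map_map, huv, E3.inner_cross_self, add_zero]
  have hmoment (x : E3) : A x + b ∈ ruling (A u) (A v + cross b (A u)) ↔ x ∈ ruling u v := by
    rw [mem_ruling_iff_cross_eq hAu hAuv, mem_ruling_iff_cross_eq hu huv, E3.cross_add_left,
      add_left_inj, ← E3.map_cross hA, A.injective.eq_iff]
  ext q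
  constructor
  · rintro ⟨x, hx, rfl⟩
    exact (hmoment x).mpr hx
  · intro hq
    have hq' : A (A.symm (q - b)) + b = q := by simp
    exact ⟨A.symm (q - b), (hmoment _).mp (hq'.symm ▸ hq), hq'⟩

/-- A unit-speed `C²` curve on the unit sphere: the director curve of an arc-length parametrized
non-cylindrical ruled surface. -/
structure IsUnitSpeedSpherical (I : Set ℝ) (v₀ : ℝ → E3) : Prop where
  contDiffOn_director : ContDiffOn ℝ 2 v₀ I
  norm_eq_one : ∀ s ∈ I, ‖v₀ s‖ = 1
  norm_n₀ : ∀ s ∈ I, ‖n₀ v₀ s‖ = 1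

/-- An arc-length parametrized non-cylindrical ruled surface of class `C²`, given by the unit
directions `v₀` and the moments `v₁` of its rulings. -/
structure IsArcLengthRuled (I : Set ℝ) (v₀ v₁ : ℝ → E3) : Prop
    extends IsUnitSpeedSpherical I v₀ where
  contDiffOn_moment : ContDiffOn ℝ 2 v₁ I
  inner_eq_zero : ∀ s ∈ I, ⟪v₀ s, v₁ s⟫ = 0

variable {I : Set ℝ} {v₀ v₁ w₀ w₁ : ℝ → E3} {s : ℝ}

/-- The moving frame `v₀, n₀, t₀` of a spherical curve, indexed so that its derivatives form a
linear system. -/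
def frenetFrame (v₀ : ℝ → E3) : Fin 3 → ℝ → E3 := ![v₀, n₀ v₀, t₀ v₀]

/-- The coefficient matrix of the system solved by `frenetFrame`, for torsion `τ`. -/
def frenetMatrix (τ : ℝ) : Matrix (Fin 3) (Fin 3) ℝ := !![0, 1, 0; -1, 0, τ; 0, -τ, 0]

lemma transpose_frenetMatrix (τ : ℝ) : (frenetMatrix τ)ᵀ = -frenetMatrix τ := by
  ext i j
  fin_cases i <;> fin_cases j <;> simp [frenetMatrix]

namespace IsUnitSpeedSpherical

lemma hasDerivAt_director (h : IsUnitSpeedSpherical I v₀) (hI : IsOpen I) (hs : s ∈ I) :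
    HasDerivAt v₀ (n₀ v₀ s) s :=
  ((h.contDiffOn_director.differentiableOn two_ne_zero).differentiableAt
    (hI.mem_nhds hs)).hasDerivAt

lemma differentiableAt_n₀ (h : IsUnitSpeedSpherical I v₀) (hI : IsOpen I) (hs : s ∈ I) :
    DifferentiableAt ℝ (n₀ v₀) s :=
  differentiableAt_deriv_of_contDiffOn_two h.contDiffOn_director hI hs

lemma inner_director_n₀ (h : IsUnitSpeedSpherical I v₀) (hI : IsOpen I) (hs : s ∈ I) :
    ⟪v₀ s, n₀ v₀ s⟫ = 0 := by
  have hconst : (fun x => ⟪v₀ x, v₀ x⟫) =ᶠ[𝓝 s] fun _ => (1 : ℝ) := by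
    filter_upwards [hI.mem_nhds hs] with x hx
    simp [h.norm_eq_one x hx]
  have hv := h.hasDerivAt_director hI hs
  have hsum := inner_deriv_add_inner_deriv_eq_zero hv hv hconst
  rw [real_inner_comm (v₀ s) (n₀ v₀ s)] at hsum
  linarith

lemma inner_director_deriv_n₀ (h : IsUnitSpeedSpherical I v₀) (hI : IsOpen I) (hs : s ∈ I) :
    ⟪v₀ s, deriv (n₀ v₀) s⟫ = -1 := by
  have hconst : (fun x => ⟪v₀ x, n₀ v₀ x⟫) =ᶠ[𝓝 s] fun _ => (0 : ℝ) := by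
    filter_upwards [hI.mem_nhds hs] with x hx using h.inner_director_n₀ hI hx
  have hsum := inner_deriv_add_inner_deriv_eq_zero (h.hasDerivAt_director hI hs)
    (h.differentiableAt_n₀ hI hs).hasDerivAt hconst
  rw [real_inner_self_eq_norm_sq, h.norm_n₀ s hs] at hsum
  linarith

lemma inner_n₀_deriv_n₀ (h : IsUnitSpeedSpherical I v₀) (hI : IsOpen I) (hs : s ∈ I) :
    ⟪n₀ v₀ s, deriv (n₀ v₀) s⟫ = 0 := by
  have hconst : (fun x => ⟪n₀ v₀ x, n₀ v₀ x⟫) =ᶠ[𝓝 s] fun _ => (1 : ℝ) := by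
    filter_upwards [hI.mem_nhds hs] with x hx
    simp [h.norm_n₀ x hx]
  have hn := (h.differentiableAt_n₀ hI hs).hasDerivAt
  have hsum := inner_deriv_add_inner_deriv_eq_zero hn hn hconst
  rw [real_inner_comm (n₀ v₀ s) (deriv (n₀ v₀) s)] at hsum
  linarith

lemma eq_sum_inner_frame (h : IsUnitSpeedSpherical I v₀) (hI : IsOpen I) (hs : s ∈ I) (x : E3) :
    x = ⟪v₀ s, x⟫ • v₀ s + ⟪n₀ v₀ s, x⟫ • n₀ v₀ s + ⟪t₀ v₀ s, x⟫ • t₀ v₀ s :=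
  E3.eq_sum_inner_crossFrame (h.norm_eq_one s hs) (h.norm_n₀ s hs) (h.inner_director_n₀ hI hs) x

lemma cross_t₀_director (h : IsUnitSpeedSpherical I v₀) (hI : IsOpen I) (hs : s ∈ I) :
    cross (t₀ v₀ s) (v₀ s) = n₀ v₀ s :=
  E3.cross_cross_self_of_orthogonal (h.norm_eq_one s hs) (h.inner_director_n₀ hI hs)

lemma cross_n₀_t₀ (h : IsUnitSpeedSpherical I v₀) (hI : IsOpen I) (hs : s ∈ I) :
    cross (n₀ v₀ s) (t₀ v₀ s) = v₀ s := by
  rw [t₀, ← E3.neg_cross, E3.cross_cross_eq_smul_sub_smul, h.inner_director_n₀ hI hs,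
    real_inner_self_eq_norm_sq, h.norm_n₀ s hs]
  module

lemma hasDerivAt_n₀ (h : IsUnitSpeedSpherical I v₀) (hI : IsOpen I) (hs : s ∈ I) :
    HasDerivAt (n₀ v₀) (-v₀ s + τ₀ v₀ s • t₀ v₀ s) s := by
  refine (h.differentiableAt_n₀ hI hs).hasDerivAt.congr_deriv ?_
  rw [h.eq_sum_inner_frame hI hs (deriv (n₀ v₀) s), h.inner_director_deriv_n₀ hI hs,
    h.inner_n₀_deriv_n₀ hI hs, real_inner_comm, ← τ₀]
  module

lemma hasDerivAt_t₀ (h : IsUnitSpeedSpherical I v₀) (hI : IsOpen I) (hs : s ∈ I) :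
    HasDerivAt (t₀ v₀) (-(τ₀ v₀ s • n₀ v₀ s)) s := by
  refine (E3.hasDerivAt_cross (h.hasDerivAt_director hI hs) (h.hasDerivAt_n₀ hI hs)).congr_deriv ?_
  rw [E3.cross_self, E3.cross_add_right, E3.cross_neg_right, E3.cross_self, E3.cross_smul_right,
    ← E3.neg_cross, h.cross_t₀_director hI hs]
  module

lemma hasDerivAt_frenetFrame (h : IsUnitSpeedSpherical I v₀) (hI : IsOpen I) (hs : s ∈ I)
    (i : Fin 3) :
    HasDerivAt (frenetFrame v₀ i) (∑ j, frenetMatrix (τ₀ v₀ s) i j • frenetFrame v₀ j s) s := by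
  fin_cases i
  · simpa [frenetFrame, frenetMatrix, Fin.sum_univ_three] using h.hasDerivAt_director hI hs
  · simpa [frenetFrame, frenetMatrix, Fin.sum_univ_three] using h.hasDerivAt_n₀ hI hs
  · simpa [frenetFrame, frenetMatrix, Fin.sum_univ_three] using h.hasDerivAt_t₀ hI hs

lemma map_frenetFrame_eq {a : ℝ} {A : E3 ≃ₗᵢ[ℝ] E3}
    (hv : IsUnitSpeedSpherical I v₀) (hw : IsUnitSpeedSpherical I w₀)
    (hI : IsOpen I) (hI' : I.OrdConnected) (hτ₀ : ∀ t ∈ I, τ₀ w₀ t = τ₀ v₀ t) (ha : a ∈ I)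
    (hAa : ∀ i, A (frenetFrame v₀ i a) = frenetFrame w₀ i a) (hs : s ∈ I) (i : Fin 3) :
    A (frenetFrame v₀ i s) = frenetFrame w₀ i s := by
  refine eq_of_hasDerivAt_skew_system hI hI'
    (f := fun i t => A (frenetFrame v₀ i t)) (ω := fun t => frenetMatrix (τ₀ v₀ t))
    (fun t _ => transpose_frenetMatrix _) (fun t ht i => ?_) (fun t ht i => ?_) ha hAa hs i
  · simpa only [map_sum, map_smul] using!
      A.toContinuousLinearEquiv.hasFDerivAt.comp_hasDerivAt t (hv.hasDerivAt_frenetFrame hI ht i)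
  · simpa only [hτ₀ t ht] using hw.hasDerivAt_frenetFrame hI ht i

theorem exists_rotation_map_eq (hv : IsUnitSpeedSpherical I v₀) (hw : IsUnitSpeedSpherical I w₀)
    (hI : IsOpen I) (hI' : I.OrdConnected) (hτ₀ : ∀ s ∈ I, τ₀ w₀ s = τ₀ v₀ s) :
    ∃ A : E3 ≃ₗᵢ[ℝ] E3, LinearMap.det (A.toLinearEquiv : E3 →ₗ[ℝ] E3) = 1 ∧
      ∀ s ∈ I, A (v₀ s) = w₀ s ∧ A (t₀ v₀ s) = t₀ w₀ s := by
  rcases I.eq_empty_or_nonempty with rfl | ⟨a, ha⟩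
  · exact ⟨.refl ℝ E3, LinearMap.det_id, by simp⟩
  obtain ⟨A, hdet, hA₀, hA₁⟩ := E3.exists_rotation_map_orthonormal_pair
    (hv.norm_eq_one a ha) (hv.norm_n₀ a ha) (hv.inner_director_n₀ hI ha)
    (hw.norm_eq_one a ha) (hw.norm_n₀ a ha) (hw.inner_director_n₀ hI ha)
  have hAa (i : Fin 3) : A (frenetFrame v₀ i a) = frenetFrame w₀ i a := by
    fin_cases i
    · exact hA₀
    · exact hA₁
    · exact (E3.map_cross hdet _ _).trans (congrArg₂ cross hA₀ hA₁)
  have hframe {s : ℝ} (hs : s ∈ I) := hv.map_frenetFrame_eq hw hI hI' hτ₀ ha hAa hs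
  exact ⟨A, hdet, fun s hs => ⟨hframe hs 0, hframe hs 2⟩⟩

end IsUnitSpeedSpherical

namespace IsArcLengthRuled

lemma hasDerivAt_strict_product_rule (h : IsArcLengthRuled I v₀ v₁) (hI : IsOpen I)
    (hs : s ∈ I) :
    HasDerivAt (strict v₀ v₁)
      (deriv (r v₀ v₁) s - (⟪deriv (r v₀ v₁) s, n₀ v₀ s⟫ • n₀ v₀ s +
        deriv (fun x => ⟪deriv (r v₀ v₁) x, n₀ v₀ x⟫) s • v₀ s)) s := by
  have hr : ContDiffOn ℝ 2 (r v₀ v₁) I :=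
    E3.contDiffOn_cross h.contDiffOn_director h.contDiffOn_moment
  have hr_deriv : HasDerivAt (r v₀ v₁) (deriv (r v₀ v₁) s) s :=
    ((hr.differentiableOn two_ne_zero).differentiableAt (hI.mem_nhds hs)).hasDerivAt
  have hcoeff : DifferentiableAt ℝ (fun x => ⟪deriv (r v₀ v₁) x, n₀ v₀ x⟫) s :=
    (differentiableAt_deriv_of_contDiffOn_two hr hI hs).inner ℝ (h.differentiableAt_n₀ hI hs)
  exact hr_deriv.sub (hcoeff.hasDerivAt.smul (h.hasDerivAt_director hI hs))

lemma differentiableAt_strict (h : IsArcLengthRuled I v₀ v₁) (hI : IsOpen I) (hs : s ∈ I) :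
    DifferentiableAt ℝ (strict v₀ v₁) s :=
  (h.hasDerivAt_strict_product_rule hI hs).differentiableAt

lemma inner_n₀_deriv_strict (h : IsArcLengthRuled I v₀ v₁) (hI : IsOpen I) (hs : s ∈ I) :
    ⟪n₀ v₀ s, deriv (strict v₀ v₁) s⟫ = 0 := by
  rw [(h.hasDerivAt_strict_product_rule hI hs).deriv]
  simp [inner_sub_right, inner_add_right, real_inner_smul_right, real_inner_comm, h.norm_n₀ s hs,
    h.inner_director_n₀ hI hs]

lemma cross_strict_director (h : IsArcLengthRuled I v₀ v₁) (hs : s ∈ I) :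
    cross (strict v₀ v₁ s) (v₀ s) = v₁ s := by
  rw [← mem_ruling_iff_cross_eq (h.norm_eq_one s hs) (h.inner_eq_zero s hs)]
  exact ⟨_, (sub_eq_add_neg _ _).trans (congrArg _ (neg_smul _ _).symm)⟩

lemma deriv_moment (h : IsArcLengthRuled I v₀ v₁) (hI : IsOpen I) (hs : s ∈ I) :
    deriv v₁ s =
      cross (deriv (strict v₀ v₁) s) (v₀ s) + cross (strict v₀ v₁ s) (n₀ v₀ s) := by
  have hmoment : v₁ =ᶠ[𝓝 s] fun x => cross (strict v₀ v₁ x) (v₀ x) := by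
    filter_upwards [hI.mem_nhds hs] with x hx using (h.cross_strict_director hx).symm
  rw [hmoment.deriv_eq]
  exact (E3.hasDerivAt_cross (h.differentiableAt_strict hI hs).hasDerivAt
    (h.hasDerivAt_director hI hs)).deriv

lemma inner_t₀_deriv_strict (h : IsArcLengthRuled I v₀ v₁) (hI : IsOpen I) (hs : s ∈ I) :
    ⟪t₀ v₀ s, deriv (strict v₀ v₁) s⟫ = κ₁ v₀ v₁ s := by
  change _ = ⟪n₀ v₀ s, deriv v₁ s⟫
  rw [h.deriv_moment hI hs, inner_add_right, E3.inner_cross_self, add_zero, E3.inner_cross_rotate,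
    real_inner_comm, t₀]

lemma cross_deriv_strict_director (h : IsArcLengthRuled I v₀ v₁) (hI : IsOpen I) (hs : s ∈ I) :
    cross (deriv (strict v₀ v₁) s) (v₀ s) = κ₁ v₀ v₁ s • n₀ v₀ s := by
  rw [h.eq_sum_inner_frame hI hs (deriv (strict v₀ v₁) s), h.inner_n₀_deriv_strict hI hs,
    h.inner_t₀_deriv_strict hI hs, zero_smul, add_zero, E3.cross_add_left, E3.cross_smul_left,
    E3.cross_smul_left, E3.cross_self, smul_zero, zero_add, h.cross_t₀_director hI hs]

lemma n₁_eq_cross_strict (h : IsArcLengthRuled I v₀ v₁) (hI : IsOpen I) (hs : s ∈ I) :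
    n₁ v₀ v₁ s = cross (strict v₀ v₁ s) (n₀ v₀ s) := by
  rw [n₁, h.deriv_moment hI hs, h.cross_deriv_strict_director hI hs]
  exact add_sub_cancel_left _ _

lemma t₁_eq_cross_strict (h : IsArcLengthRuled I v₀ v₁) (hI : IsOpen I) (hs : s ∈ I) :
    t₁ v₀ v₁ s = cross (strict v₀ v₁ s) (t₀ v₀ s) := by
  rw [t₁, h.n₁_eq_cross_strict hI hs, ← h.cross_strict_director hs, t₀,
    E3.leibniz_cross (strict v₀ v₁ s), add_comm]

lemma deriv_n₁ (h : IsArcLengthRuled I v₀ v₁) (hI : IsOpen I) (hs : s ∈ I) :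
    deriv (n₁ v₀ v₁) s =
      cross (deriv (strict v₀ v₁) s) (n₀ v₀ s) + cross (strict v₀ v₁ s) (deriv (n₀ v₀) s) := by
  have hn₁ : n₁ v₀ v₁ =ᶠ[𝓝 s] fun x => cross (strict v₀ v₁ x) (n₀ v₀ x) := by
    filter_upwards [hI.mem_nhds hs] with x hx using h.n₁_eq_cross_strict hI hx
  rw [hn₁.deriv_eq]
  exact (E3.hasDerivAt_cross (h.differentiableAt_strict hI hs).hasDerivAt
    (h.differentiableAt_n₀ hI hs).hasDerivAt).deriv

lemma inner_director_deriv_strict (h : IsArcLengthRuled I v₀ v₁) (hI : IsOpen I) (hs : s ∈ I) :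
    ⟪v₀ s, deriv (strict v₀ v₁) s⟫ = τ₁ v₀ v₁ s := by
  have hcancel : ⟪deriv (n₀ v₀) s, cross (strict v₀ v₁ s) (t₀ v₀ s)⟫ +
      ⟪cross (strict v₀ v₁ s) (deriv (n₀ v₀) s), t₀ v₀ s⟫ = 0 := by
    rw [← E3.neg_cross (deriv (n₀ v₀) s), inner_neg_left, E3.inner_cross_left, add_neg_cancel]
  have hτ₁ : τ₁ v₀ v₁ s = ⟪cross (deriv (strict v₀ v₁) s) (n₀ v₀ s), t₀ v₀ s⟫ := by
    rw [τ₁, h.t₁_eq_cross_strict hI hs, h.deriv_n₁ hI hs, inner_add_left]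
    linarith
  rw [hτ₁, E3.inner_cross_left, h.cross_n₀_t₀ hI hs, real_inner_comm]

lemma hasDerivAt_strict (h : IsArcLengthRuled I v₀ v₁) (hI : IsOpen I) (hs : s ∈ I) :
    HasDerivAt (strict v₀ v₁) (τ₁ v₀ v₁ s • v₀ s + κ₁ v₀ v₁ s • t₀ v₀ s) s := by
  refine (h.differentiableAt_strict hI hs).hasDerivAt.congr_deriv ?_
  rw [h.eq_sum_inner_frame hI hs (deriv (strict v₀ v₁) s), h.inner_n₀_deriv_strict hI hs,
    h.inner_t₀_deriv_strict hI hs, h.inner_director_deriv_strict hI hs, zero_smul, add_zero]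

theorem exists_strict_eq_map_strict_add {A : E3 ≃ₗᵢ[ℝ] E3}
    (hv : IsArcLengthRuled I v₀ v₁) (hw : IsArcLengthRuled I w₀ w₁)
    (hI : IsOpen I) (hI' : I.OrdConnected)
    (hκ : ∀ s ∈ I, κ₁ w₀ w₁ s = κ₁ v₀ v₁ s) (hτ₁ : ∀ s ∈ I, τ₁ w₀ w₁ s = τ₁ v₀ v₁ s)
    (hA : ∀ s ∈ I, A (v₀ s) = w₀ s ∧ A (t₀ v₀ s) = t₀ w₀ s) :
    ∃ b, ∀ s ∈ I, strict w₀ w₁ s = A (strict v₀ v₁ s) + b := by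
  have hderiv : ∀ s ∈ I, HasDerivAt (fun t => A (strict v₀ v₁ t))
      (τ₁ w₀ w₁ s • w₀ s + κ₁ w₀ w₁ s • t₀ w₀ s) s := by
    intro s hs
    rw [hκ s hs, hτ₁ s hs, ← (hA s hs).1, ← (hA s hs).2]
    simpa only [map_add, map_smul] using!
      A.toContinuousLinearEquiv.hasFDerivAt.comp_hasDerivAt s (hv.hasDerivAt_strict hI hs)
  exact hI.exists_eq_add_of_deriv_eq hI'.isPreconnected
    (fun s hs => (hw.hasDerivAt_strict hI hs).differentiableAt.differentiableWithinAt)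
    (fun s hs => (hderiv s hs).differentiableAt.differentiableWithinAt)
    (fun s hs => (hw.hasDerivAt_strict hI hs).deriv.trans (hderiv s hs).deriv.symm)

end IsArcLengthRuled

end Ruled

theorem dual_invariants_complete_general {I : Set ℝ} {v₀ v₁ w₀ w₁ : ℝ → E3}
    (hI : IsOpen I) (hI' : I.OrdConnected)
    (hv : IsArcLengthRuled I v₀ v₁) (hw : IsArcLengthRuled I w₀ w₁)
    (hκ : ∀ s ∈ I, κ₁ w₀ w₁ s = κ₁ v₀ v₁ s)
    (hτ₀ : ∀ s ∈ I, τ₀ w₀ s = τ₀ v₀ s)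
    (hτ₁ : ∀ s ∈ I, τ₁ w₀ w₁ s = τ₁ v₀ v₁ s) :
    ∃ (A : E3 ≃ₗᵢ[ℝ] E3) (b : E3),
      LinearMap.det (A.toLinearEquiv : E3 →ₗ[ℝ] E3) = 1 ∧
      ∀ s ∈ I,
        w₀ s = A (v₀ s) ∧
        w₁ s = A (v₁ s) + cross b (A (v₀ s)) ∧
        (fun x => A x + b) '' ruling (v₀ s) (v₁ s) = ruling (w₀ s) (w₁ s) := by
  obtain ⟨A, hdet, hA⟩ := hv.exists_rotation_map_eq hw.toIsUnitSpeedSpherical hI hI' hτ₀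
  obtain ⟨b, hb⟩ := hv.exists_strict_eq_map_strict_add hw hI hI' hκ hτ₁ hA
  refine ⟨A, b, hdet, fun s hs => ?_⟩
  have hdirector : w₀ s = A (v₀ s) := (hA s hs).1.symm
  have hmoment : w₁ s = A (v₁ s) + cross b (A (v₀ s)) := by
    rw [← hw.cross_strict_director hs, hb s hs, hdirector, E3.cross_add_left, ← E3.map_cross hdet,
      hv.cross_strict_director hs]
  refine ⟨hdirector, hmoment, ?_⟩
  rw [hdirector, hmoment]
  exact image_ruling hdet b (hv.norm_eq_one s hs) (hv.inner_eq_zero s hs)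

/-- Completeness of the dual invariants: two arc-length parametrized non-cylindrical
ruled surfaces with the same invariants `κ₁, τ₀, τ₁` differ by a Euclidean motion
`x ↦ A x + b` with `A ∈ SO(3)`; in particular this motion carries every ruling of the
first surface onto the corresponding ruling of the second. -/
theorem dual_invariants_complete
    (I : Set ℝ) (v₀ v₁ w₀ w₁ : ℝ → E3)
    (hI : IsOpen I) (hI' : I.OrdConnected)
    (hv₀ : ContDiffOn ℝ (⊤ : ℕ∞) v₀ I) (hv₁ : ContDiffOn ℝ (⊤ : ℕ∞) v₁ I)
    (hunit : ∀ s ∈ I, ‖v₀ s‖ = 1) (horth : ∀ s ∈ I, ⟪v₀ s, v₁ s⟫ = 0)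
    (harc : ∀ s ∈ I, ‖deriv v₀ s‖ = 1)
    (hw₀ : ContDiffOn ℝ (⊤ : ℕ∞) w₀ I) (hw₁ : ContDiffOn ℝ (⊤ : ℕ∞) w₁ I)
    (hunitw : ∀ s ∈ I, ‖w₀ s‖ = 1) (horthw : ∀ s ∈ I, ⟪w₀ s, w₁ s⟫ = 0)
    (harcw : ∀ s ∈ I, ‖deriv w₀ s‖ = 1)
    (hκ : ∀ s ∈ I, κ₁ w₀ w₁ s = κ₁ v₀ v₁ s)
    (hτ₀ : ∀ s ∈ I, τ₀ w₀ s = τ₀ v₀ s)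
    (hτ₁ : ∀ s ∈ I, τ₁ w₀ w₁ s = τ₁ v₀ v₁ s) :
    ∃ (A : E3 ≃ₗᵢ[ℝ] E3) (b : E3),
      LinearMap.det (A.toLinearEquiv : E3 →ₗ[ℝ] E3) = 1 ∧
      ∀ s ∈ I,
        w₀ s = A (v₀ s) ∧
        w₁ s = A (v₁ s) + cross b (A (v₀ s)) ∧
        (fun x => A x + b) '' {p | ∃ t : ℝ, p = cross (v₀ s) (v₁ s) + t • v₀ s} =
          {p | ∃ t : ℝ, p = cross (w₀ s) (w₁ s) + t • w₀ s} := by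
  have htwo : (2 : WithTop ℕ∞) ≤ ((⊤ : ℕ∞) : WithTop ℕ∞) := WithTop.coe_le_coe.mpr le_top
  exact dual_invariants_complete_general hI hI'
    ⟨⟨hv₀.of_le htwo, hunit, harc⟩, hv₁.of_le htwo, horth⟩
    ⟨⟨hw₀.of_le htwo, hunitw, harcw⟩, hw₁.of_le htwo, horthw⟩ hκ hτ₀ hτ₁
end
end

section
/- (Invariance of the dual invariants under Euclidean motions.) Let (v₀¹, v₁¹) be an arc-length parametrized non-cylindrical ruled surface on I, let A ∈ SO(3) (a linear isometry of ℝ³ with determinant 1) and b ∈ ℝ³, and define v₀²(s) = A(v₀¹(s)) and v₁²(s) = A(v₁¹(s)) + b × A(v₀¹(s)). Then (v₀², v₁²) is again an arc-length parametrized non-cylindrical ruled surface on I, and its invariants coincide with those of (v₀¹, v₁¹): κ₁²(s) = κ₁¹(s), τ₀²(s) = τ₀¹(s) and τ₁²(s) = τ₁¹(s) for all s ∈ I. -/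
noncomputable section
open scoped RealInnerProductSpace

open Ruled

/-!
Encode a line with direction `x₀` and moment `x₁` as the dual vector `x₀ + ε x₁`, `ε² = 0`. The
motion `x ↦ A x + b` acts on dual vectors by `x₀ + ε x₁ ↦ A x₀ + ε (A x₁ + b × A x₀)`, and this
linear action preserves the dual inner product (`b × ·` is skew) and the dual cross product
(`b × ·` is a derivation and `A` preserves orientation). Being linear it commutes with
differentiation, so it carries the dual Frenet frame to the dual Frenet frame, and the invariants,
which are dual inner products, do not change.
-/

namespace Ruled

open Matrix

section CrossProduct

theorem inner_cross (u v w : E3) : ⟪u, cross v w⟫ = u.ofLp ⬝ᵥ v.ofLp ⨯₃ w.ofLp := by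
  rw [EuclideanSpace.inner_eq_star_dotProduct, star_trivial, dotProduct_comm]
  rfl

theorem inner_cross_left (b u v : E3) : ⟪cross b u, v⟫ = -⟪u, cross b v⟫ := by
  rw [real_inner_comm, inner_cross, inner_cross, triple_product_permutation, ← cross_anticomm,
    dotProduct_neg, triple_product_permutation, triple_product_permutation]

theorem cross_add (u v w : E3) : cross u (v + w) = cross u v + cross u w :=
  congrArg (WithLp.toLp 2) (map_add (crossProduct u.ofLp) v.ofLp w.ofLp)

theorem add_cross (u v w : E3) : cross (u + v) w = cross u w + cross v w :=
  congrArg (WithLp.toLp 2) (LinearMap.map_add₂ crossProduct u.ofLp v.ofLp w.ofLp)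

theorem cross_cross_eq_add (b u v : E3) :
    cross b (cross u v) = cross (cross b u) v + cross u (cross b v) :=
  congrArg (WithLp.toLp 2) (leibniz_cross b.ofLp u.ofLp v.ofLp)

theorem inner_cross_eq_basis_det (u v w : E3) :
    ⟪u, cross v w⟫ = (EuclideanSpace.basisFun (Fin 3) ℝ).toBasis.det ![u, v, w] := by
  have toMatrix_eq : (EuclideanSpace.basisFun (Fin 3) ℝ).toBasis.toMatrix ![u, v, w] =
      (of ![u.ofLp, v.ofLp, w.ofLp])ᵀ := by
    ext i j
    fin_cases j <;> rfl
  rw [Module.Basis.det_apply, toMatrix_eq, det_transpose, inner_cross]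
  exact triple_product_eq_det u.ofLp v.ofLp w.ofLp

theorem inner_map_cross_map_map (f : E3 →ₗ[ℝ] E3) (u v w : E3) :
    ⟪f u, cross (f v) (f w)⟫ = LinearMap.det f * ⟪u, cross v w⟫ := by
  have map_triple : f ∘ ![u, v, w] = ![f u, f v, f w] := by
    ext i : 1
    fin_cases i <;> rfl
  rw [inner_cross_eq_basis_det, inner_cross_eq_basis_det, ← map_triple, Module.Basis.det_comp]

theorem cross_map_map (A : E3 ≃ₗᵢ[ℝ] E3) (u v : E3) :
    cross (A u) (A v) = LinearMap.det (A.toLinearEquiv : E3 →ₗ[ℝ] E3) • A (cross u v) := by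
  refine ext_inner_left ℝ fun w => ?_
  obtain ⟨w, rfl⟩ := A.surjective w
  rw [inner_smul_right, A.inner_map_map]
  exact inner_map_cross_map_map A.toLinearEquiv w u v

/-- The cross product `b × ·` as a continuous linear map. -/
def crossCLM (b : E3) : E3 →L[ℝ] E3 :=
  LinearMap.toContinuousLinearMap
    ((WithLp.linearEquiv 2 ℝ (Fin 3 → ℝ)).symm.toLinearMap ∘ₗ crossProduct b.ofLp ∘ₗ
      (WithLp.linearEquiv 2 ℝ (Fin 3 → ℝ)).toLinearMap)

end CrossProduct

section MotionMoment

variable (A : E3 ≃ₗᵢ[ℝ] E3) (b : E3)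

/-- The moment `A x₁ + b × A x₀` of the image, under the motion `x ↦ A x + b`, of the line with
direction `x₀` and moment `x₁`, as a linear function of the pair `(x₀, x₁)`. It is the `ε`-part of
the action of the motion on dual vectors. -/
def motionMoment : E3 × E3 →L[ℝ] E3 :=
  A.toContinuousLinearEquiv.toContinuousLinearMap ∘L .snd ℝ E3 E3 +
    crossCLM b ∘L A.toContinuousLinearEquiv.toContinuousLinearMap ∘L .fst ℝ E3 E3

theorem motionMoment_apply (x₀ x₁ : E3) :
    motionMoment A b (x₀, x₁) = A x₁ + cross b (A x₀) :=
  rfl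

theorem inner_map_motionMoment_add (x₀ x₁ y₀ y₁ : E3) :
    ⟪A x₀, motionMoment A b (y₀, y₁)⟫ + ⟪motionMoment A b (x₀, x₁), A y₀⟫ =
      ⟪x₀, y₁⟫ + ⟪x₁, y₀⟫ := by
  simp only [motionMoment_apply, inner_add_left, inner_add_right, inner_cross_left,
    A.inner_map_map]
  ring

theorem inner_map_motionMoment_self (x₀ x₁ : E3) :
    ⟪A x₀, motionMoment A b (x₀, x₁)⟫ = ⟪x₀, x₁⟫ := by
  have h := inner_map_motionMoment_add A b x₀ x₁ x₀ x₁
  rw [real_inner_comm (A x₀), real_inner_comm x₀] at h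
  linarith

theorem cross_map_motionMoment_add
    (hA : LinearMap.det (A.toLinearEquiv : E3 →ₗ[ℝ] E3) = 1) (x₀ x₁ y₀ y₁ : E3) :
    cross (A x₀) (motionMoment A b (y₀, y₁)) + cross (motionMoment A b (x₀, x₁)) (A y₀) =
      motionMoment A b (cross x₀ y₀, cross x₀ y₁ + cross x₁ y₀) := by
  have map_cross (u v : E3) : A (cross u v) = cross (A u) (A v) := by
    rw [cross_map_map, hA, one_smul]
  simp only [motionMoment_apply, map_add, map_cross, cross_add, add_cross]
  rw [cross_cross_eq_add b (A x₀)]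
  abel

theorem deriv_motionMoment {f g : ℝ → E3} {s : ℝ} (hf : DifferentiableAt ℝ f s)
    (hg : DifferentiableAt ℝ g s) :
    deriv (fun t => motionMoment A b (f t, g t)) s = motionMoment A b (deriv f s, deriv g s) :=
  ((motionMoment A b).hasFDerivAt.comp_hasDerivAt s (hf.hasDerivAt.prodMk hg.hasDerivAt)).deriv

end MotionMoment

theorem deriv_linearIsometryEquiv_comp {𝕜 V W : Type*} [NontriviallyNormedField 𝕜]
    [NormedAddCommGroup V] [NormedSpace 𝕜 V] [NormedAddCommGroup W] [NormedSpace 𝕜 W]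
    (A : V ≃ₗᵢ[𝕜] W) (f : 𝕜 → V) :
    deriv (A ∘ f) = A ∘ deriv f := by
  ext1 s
  exact DFunLike.congr_fun (A.comp_fderiv (f := f) (x := s)) 1

section Invariants

variable (A : E3 ≃ₗᵢ[ℝ] E3) (b : E3) {v₀ v₁ : ℝ → E3} {s : ℝ}

theorem n₀_motion (v₀ : ℝ → E3) : n₀ (A ∘ v₀) = A ∘ n₀ v₀ :=
  deriv_linearIsometryEquiv_comp A v₀

theorem κ₁_motion (hv₀ : DifferentiableAt ℝ v₀ s) (hv₁ : DifferentiableAt ℝ v₁ s) :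
    κ₁ (A ∘ v₀) (fun t => motionMoment A b (v₀ t, v₁ t)) s = κ₁ v₀ v₁ s := by
  rw [κ₁, deriv_linearIsometryEquiv_comp, deriv_motionMoment A b hv₀ hv₁]
  exact inner_map_motionMoment_self A b _ _

theorem n₁_motion (hv₀ : DifferentiableAt ℝ v₀ s) (hv₁ : DifferentiableAt ℝ v₁ s) :
    n₁ (A ∘ v₀) (fun t => motionMoment A b (v₀ t, v₁ t)) s =
      motionMoment A b (n₀ v₀ s, n₁ v₀ v₁ s) := by
  rw [n₁, κ₁_motion A b hv₀ hv₁, deriv_motionMoment A b hv₀ hv₁, deriv_linearIsometryEquiv_comp]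
  simp only [motionMoment_apply, n₀, n₁, Function.comp_apply, map_sub, map_smul]
  abel

theorem differentiableAt_n₀ (hv₀ : ContDiffAt ℝ 2 v₀ s) : DifferentiableAt ℝ (n₀ v₀) s :=
  (hv₀.derivWithin (m := 1) (by norm_num)).differentiableAt one_ne_zero

theorem differentiableAt_n₁ (hv₀ : ContDiffAt ℝ 2 v₀ s) (hv₁ : ContDiffAt ℝ 2 v₁ s) :
    DifferentiableAt ℝ (n₁ v₀ v₁) s :=
  have hv₀' : DifferentiableAt ℝ (deriv v₀) s := differentiableAt_n₀ hv₀
  have hv₁' : DifferentiableAt ℝ (deriv v₁) s := differentiableAt_n₀ hv₁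
  hv₁'.sub ((hv₀'.inner ℝ hv₁').smul hv₀')

theorem deriv_n₁_motion (hv₀ : ContDiffAt ℝ 2 v₀ s) (hv₁ : ContDiffAt ℝ 2 v₁ s) :
    deriv (n₁ (A ∘ v₀) (fun t => motionMoment A b (v₀ t, v₁ t))) s =
      motionMoment A b (deriv (n₀ v₀) s, deriv (n₁ v₀ v₁) s) := by
  rw [← deriv_motionMoment A b (differentiableAt_n₀ hv₀) (differentiableAt_n₁ hv₀ hv₁)]
  apply Filter.EventuallyEq.deriv_eq
  filter_upwards [hv₀.eventually (by simp), hv₁.eventually (by simp)] with t ht₀ ht₁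
  exact n₁_motion A b (ht₀.differentiableAt two_ne_zero) (ht₁.differentiableAt two_ne_zero)

variable {A}

theorem t₀_motion (hA : LinearMap.det (A.toLinearEquiv : E3 →ₗ[ℝ] E3) = 1)
    (v₀ : ℝ → E3) : t₀ (A ∘ v₀) = A ∘ t₀ v₀ := by
  ext1 s
  simp only [t₀, n₀_motion, Function.comp_apply, cross_map_map, hA, one_smul]

theorem t₁_motion (hA : LinearMap.det (A.toLinearEquiv : E3 →ₗ[ℝ] E3) = 1)
    (hv₀ : DifferentiableAt ℝ v₀ s) (hv₁ : DifferentiableAt ℝ v₁ s) :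
    t₁ (A ∘ v₀) (fun t => motionMoment A b (v₀ t, v₁ t)) s =
      motionMoment A b (t₀ v₀ s, t₁ v₀ v₁ s) := by
  rw [t₁, n₁_motion A b hv₀ hv₁, n₀_motion]
  exact cross_map_motionMoment_add A b hA _ _ _ _

theorem τ₀_motion (hA : LinearMap.det (A.toLinearEquiv : E3 →ₗ[ℝ] E3) = 1)
    (v₀ : ℝ → E3) : τ₀ (A ∘ v₀) = τ₀ v₀ := by
  ext s
  rw [τ₀, n₀_motion, t₀_motion hA, deriv_linearIsometryEquiv_comp]
  exact A.inner_map_map _ _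

theorem τ₁_motion (hA : LinearMap.det (A.toLinearEquiv : E3 →ₗ[ℝ] E3) = 1)
    (hv₀ : ContDiffAt ℝ 2 v₀ s) (hv₁ : ContDiffAt ℝ 2 v₁ s) :
    τ₁ (A ∘ v₀) (fun t => motionMoment A b (v₀ t, v₁ t)) s = τ₁ v₀ v₁ s := by
  rw [τ₁, n₀_motion, deriv_linearIsometryEquiv_comp, deriv_n₁_motion A b hv₀ hv₁, t₀_motion hA,
    t₁_motion b hA (hv₀.differentiableAt two_ne_zero) (hv₁.differentiableAt two_ne_zero)]
  exact inner_map_motionMoment_add A b _ _ _ _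

end Invariants

end Ruled

theorem dual_invariants_euclidean_invariant_general {I : Set ℝ} {v₀ v₁ : ℝ → E3}
    {n : WithTop ℕ∞} (hn : 2 ≤ n) (hI : IsOpen I)
    (hv₀ : ContDiffOn ℝ n v₀ I) (hv₁ : ContDiffOn ℝ n v₁ I)
    (A : E3 ≃ₗᵢ[ℝ] E3) (hA : LinearMap.det (A.toLinearEquiv : E3 →ₗ[ℝ] E3) = 1) (b : E3) :
    let w₀ : ℝ → E3 := A ∘ v₀
    let w₁ : ℝ → E3 := fun s => A (v₁ s) + cross b (A (v₀ s))
    (ContDiffOn ℝ n w₀ I ∧ ContDiffOn ℝ n w₁ I) ∧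
    ∀ s ∈ I, (‖w₀ s‖ = ‖v₀ s‖ ∧ ⟪w₀ s, w₁ s⟫ = ⟪v₀ s, v₁ s⟫ ∧ ‖deriv w₀ s‖ = ‖deriv v₀ s‖) ∧
      κ₁ w₀ w₁ s = κ₁ v₀ v₁ s ∧ τ₀ w₀ s = τ₀ v₀ s ∧ τ₁ w₀ w₁ s = τ₁ v₀ v₁ s := by
  intro w₀ w₁
  refine ⟨⟨A.contDiff.comp_contDiffOn hv₀,
    (motionMoment A b).contDiff.comp_contDiffOn (hv₀.prodMk hv₁)⟩, fun s hs => ?_⟩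
  have hv₀s : ContDiffAt ℝ 2 v₀ s := (hv₀.contDiffAt (hI.mem_nhds hs)).of_le hn
  have hv₁s : ContDiffAt ℝ 2 v₁ s := (hv₁.contDiffAt (hI.mem_nhds hs)).of_le hn
  have norm_deriv : ‖deriv w₀ s‖ = ‖deriv v₀ s‖ := by
    rw [deriv_linearIsometryEquiv_comp, Function.comp_apply, A.norm_map]
  exact ⟨⟨A.norm_map _, inner_map_motionMoment_self A b _ _, norm_deriv⟩,
    κ₁_motion A b (hv₀s.differentiableAt two_ne_zero) (hv₁s.differentiableAt two_ne_zero),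
    congrFun (τ₀_motion hA v₀) s, τ₁_motion b hA hv₀s hv₁s⟩

/-- Invariance of the dual invariants under Euclidean motions: if `w₀ = A ∘ v₀` and
`w₁ = A ∘ v₁ + b × (A ∘ v₀)` for `A ∈ SO(3)` and `b ∈ ℝ³`, then `(w₀, w₁)` is again an
arc-length parametrized non-cylindrical ruled surface with the same invariants. -/
theorem dual_invariants_euclidean_invariant
    (I : Set ℝ) (v₀ v₁ w₀ w₁ : ℝ → E3)
    (hI : IsOpen I) (hI' : I.OrdConnected)
    (hv₀ : ContDiffOn ℝ (⊤ : ℕ∞) v₀ I) (hv₁ : ContDiffOn ℝ (⊤ : ℕ∞) v₁ I)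
    (hunit : ∀ s ∈ I, ‖v₀ s‖ = 1) (horth : ∀ s ∈ I, ⟪v₀ s, v₁ s⟫ = 0)
    (harc : ∀ s ∈ I, ‖deriv v₀ s‖ = 1)
    (A : E3 ≃ₗᵢ[ℝ] E3) (hA : LinearMap.det (A.toLinearEquiv : E3 →ₗ[ℝ] E3) = 1) (b : E3)
    (hw₀ : ∀ s, w₀ s = A (v₀ s))
    (hw₁ : ∀ s, w₁ s = A (v₁ s) + cross b (A (v₀ s))) :
    (ContDiffOn ℝ (⊤ : ℕ∞) w₀ I ∧ ContDiffOn ℝ (⊤ : ℕ∞) w₁ I ∧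
      (∀ s ∈ I, ‖w₀ s‖ = 1) ∧ (∀ s ∈ I, ⟪w₀ s, w₁ s⟫ = 0) ∧
      (∀ s ∈ I, ‖deriv w₀ s‖ = 1)) ∧
    ∀ s ∈ I,
      κ₁ w₀ w₁ s = κ₁ v₀ v₁ s ∧ τ₀ w₀ s = τ₀ v₀ s ∧ τ₁ w₀ w₁ s = τ₁ v₀ v₁ s := by
  obtain rfl : w₀ = A ∘ v₀ := funext hw₀
  obtain rfl : w₁ = fun s => A (v₁ s) + cross b (A (v₀ s)) := funext hw₁
  obtain ⟨⟨contDiff_w₀, contDiff_w₁⟩, h⟩ :=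
    dual_invariants_euclidean_invariant_general (by norm_cast) hI hv₀ hv₁ A hA b
  exact ⟨⟨contDiff_w₀, contDiff_w₁, fun s hs => (h s hs).1.1.trans (hunit s hs),
    fun s hs => (h s hs).1.2.1.trans (horth s hs), fun s hs => (h s hs).1.2.2.trans (harc s hs)⟩,
    fun s hs => (h s hs).2⟩
end
end

section
/- (Canonical Taylor expansion at a singular point.) Assume 0 ∈ I and the normalization v₀(0) = (1,0,0), v₀'(0) = (0,1,0), v₁(0) = 0 and v₁'(0) = 0 (so that κ₁(0) = 0, v₌(0), n₀(0), t₀(0) are the standard basis vectors, v₁(0) = n₁(0) = t₁(0) = 0, and F is singular at (0,0) with F(0,0) = 0). Let P : ℝ² → ℝ³ be the cubic polynomial map P(s,t) = ( t − (1/2)t s² + (τ₁(0)/2) s³ , t s − (τ₁(0)/2) s² − ((2 τ₀(0) κ₁'(0) + τ₁'(0))/6) s³ , (κ₁'(0)/2) s² + (τ₀(0)/2) t s² + ((κ₁''(0) − 2 τ₀(0) τ₁(0))/6) s³ ). Then F(s,t) − P(s,t) = o(‖(s,t)‖³) as (s,t) → (0,0); that is, the degree-3 Taylor polynomial of F at (0,0)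 equals P. -/
noncomputable section
open scoped RealInnerProductSpace

open Ruled

open Asymptotics

/-!
Since `r = v₀ × v₁` and `v₁`, `v₁'` vanish at the singular point, the Leibniz rule leaves
`r'' = v₀ × v₁''` and `r''' = v₀ × v₁''' + 3 v₀' × v₁''` there. In the orthonormal frame
`v₀, n₀, t₀` the coefficients of `v₁''` and `v₁'''` along `n₀` come from `κ₁'` and `κ₁''`, those
along `t₀` from `τ₁` and `τ₁'`, and differentiating `⟪v₀, v₁⟫ = 0` twice kills the one of `v₁''`
along `v₀`. Together with `v₀'' = -v₀ + τ₀ t₀` this determines the one-variable Taylor polynomials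
of `r` and `v₀`, hence the expansion of `F = r + t v₀`.
-/

open Filter Finset Topology
open scoped Nat

namespace Ruled

section Calculus

variable {𝕜 E E' G : Type*} [NontriviallyNormedField 𝕜]
  [NormedAddCommGroup E] [NormedSpace 𝕜 E] [NormedAddCommGroup E'] [NormedSpace 𝕜 E']
  [NormedAddCommGroup G] [NormedSpace 𝕜 G]

theorem differentiableAt_deriv_of_contDiffAt {f : 𝕜 → E} {x : 𝕜} (hf : ContDiffAt 𝕜 2 f x) :
    DifferentiableAt 𝕜 (deriv f) x :=
  (hf.derivWithin (m := 1) (by norm_num)).differentiableAt one_ne_zero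

theorem iteratedDeriv_bilinear (B : E →L[𝕜] E' →L[𝕜] G) {n : ℕ} {f : 𝕜 → E} {g : 𝕜 → E'} {x : 𝕜}
    (hf : ContDiffAt 𝕜 n f x) (hg : ContDiffAt 𝕜 n g x) :
    iteratedDeriv n (fun y => B (f y) (g y)) x =
      ∑ ij ∈ antidiagonal n,
        n.choose ij.1 • B (iteratedDeriv ij.1 f x) (iteratedDeriv ij.2 g x) := by
  induction n generalizing f g with
  | zero => simp
  | succ n ih =>
    have hf' : ContDiffAt 𝕜 n (deriv f) x := hf.derivWithin (by simp)
    have hg' : ContDiffAt 𝕜 n (deriv g) x := hg.derivWithin (by simp)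
    have hfn : ContDiffAt 𝕜 n f x := hf.of_le (by simp)
    have hgn : ContDiffAt 𝕜 n g x := hg.of_le (by simp)
    have hderiv : deriv (fun y => B (f y) (g y)) =ᶠ[𝓝 x]
        (fun y => B (f y) (deriv g y)) + fun y => B (deriv f y) (g y) := by
      filter_upwards [hf.eventually (by simp), hg.eventually (by simp)] with y hfy hgy
      exact B.deriv_of_bilinear (fun _ => hfy.differentiableAt (by simp))
        fun _ => hgy.differentiableAt (by simp)
    have hsymm : ∀ ij ∈ antidiagonal n, n.choose ij.2 = n.choose ij.1 := fun ij hij =>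
      (Nat.choose_symm_of_eq_add (mem_antidiagonal.1 hij).symm).symm
    have hB : ∀ {u : 𝕜 → E} {v : 𝕜 → E'}, ContDiffAt 𝕜 n u x → ContDiffAt 𝕜 n v x →
        ContDiffAt 𝕜 n (fun y => B (u y) (v y)) x := fun hu hv =>
      (B.contDiff.contDiffAt.comp x hu).clm_apply hv
    rw [iteratedDeriv_succ', hderiv.iteratedDeriv_eq n, iteratedDeriv_add (hB hfn hg') (hB hf' hgn),
      ih hfn hg', ih hf' hgn,
      sum_antidiagonal_choose_succ_nsmul
        fun i j => B (iteratedDeriv i f x) (iteratedDeriv j g x)]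
    simp only [iteratedDeriv_succ']
    congr 1
    exact sum_congr rfl fun ij hij => by rw [hsymm ij hij]

end Calculus

section Taylor

variable {E : Type*} [NormedAddCommGroup E] [NormedSpace ℝ E] {n : ℕ} {s₀ : ℝ}

theorem taylor_isLittleO_of_contDiffAt {f : ℝ → E} (hf : ContDiffAt ℝ n f s₀) :
    (fun h => f (s₀ + h) -
        ∑ k ∈ range (n + 1), ((k ! : ℝ)⁻¹ * h ^ k) • iteratedDeriv k f s₀) =o[𝓝 0]
      fun h : ℝ => h ^ n := by
  obtain ⟨u, hu, hfu⟩ := hf.contDiffOn le_rfl (by simp)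
  obtain ⟨ε, hε, hball⟩ := Metric.mem_nhds_iff.1 (by simpa using hu)
  have hs₀ : s₀ ∈ Metric.ball s₀ ε := Metric.mem_ball_self hε
  have htaylor := taylor_isLittleO (convex_ball s₀ ε) hs₀ (hfu.mono hball)
  simp only [taylor_within_apply, iteratedDerivWithin_of_isOpen Metric.isOpen_ball hs₀,
    Metric.isOpen_ball.nhdsWithin_eq hs₀] at htaylor
  have hshift : Tendsto (fun h : ℝ => s₀ + h) (𝓝 0) (𝓝 s₀) :=
    (continuous_const_add s₀).tendsto' _ _ (add_zero s₀)
  simpa only [Function.comp_def, add_sub_cancel_left] using htaylor.comp_tendsto hshift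

theorem taylor_ruled_isLittleO {γ e : ℝ → E} (hγ : ContDiffAt ℝ (n + 1 : ℕ) γ s₀)
    (he : ContDiffAt ℝ n e s₀) :
    (fun p : ℝ × ℝ => γ (s₀ + p.1) + p.2 • e (s₀ + p.1) -
        (∑ k ∈ range (n + 2), ((k ! : ℝ)⁻¹ * p.1 ^ k) • iteratedDeriv k γ s₀ +
          p.2 • ∑ k ∈ range (n + 1), ((k ! : ℝ)⁻¹ * p.1 ^ k) • iteratedDeriv k e s₀)) =o[𝓝 0]
      fun p : ℝ × ℝ => ‖p‖ ^ (n + 1) := by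
  have hfst : Tendsto (Prod.fst : ℝ × ℝ → ℝ) (𝓝 0) (𝓝 0) := continuous_fst.tendsto' _ _ rfl
  have hfstO : (Prod.fst : ℝ × ℝ → ℝ) =O[𝓝 0] fun p : ℝ × ℝ => ‖p‖ :=
    isBigO_fst_prod'.norm_right
  have hsndO : (Prod.snd : ℝ × ℝ → ℝ) =O[𝓝 0] fun p : ℝ × ℝ => ‖p‖ :=
    isBigO_snd_prod'.norm_right
  have hγ' := ((taylor_isLittleO_of_contDiffAt hγ).comp_tendsto hfst).trans_isBigO
    (hfstO.pow (n + 1))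
  have he' := hsndO.smul_isLittleO <|
    ((taylor_isLittleO_of_contDiffAt he).comp_tendsto hfst).trans_isBigO (hfstO.pow n)
  simp only [smul_eq_mul, ← pow_succ'] at he'
  refine (hγ'.add he').congr_left fun p => ?_
  simp only [Function.comp_apply, smul_sub]
  abel

end Taylor

section InnerProduct

variable {E : Type*} [NormedAddCommGroup E] [InnerProductSpace ℝ E] {f g : ℝ → E} {s c : ℝ}

theorem inner_deriv_self_eq_zero_of_norm_eventually_eq (hf : DifferentiableAt ℝ f s)
    (h : ∀ᶠ y in 𝓝 s, ‖f y‖ = c) : ⟪f s, deriv f s⟫ = 0 := by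
  have hconst : (fun y => ⟪f y, f y⟫) =ᶠ[𝓝 s] fun _ => c ^ 2 := by
    filter_upwards [h] with y hy
    rw [real_inner_self_eq_norm_sq, hy]
  have hderiv := hconst.deriv_eq
  rw [deriv_inner_apply ℝ hf hf, deriv_const, real_inner_comm (f s)] at hderiv
  linarith

theorem deriv_deriv_inner (hf : ContDiffAt ℝ 2 f s) (hg : ContDiffAt ℝ 2 g s) :
    deriv (deriv fun y => ⟪f y, g y⟫) s =
      ⟪f s, deriv (deriv g) s⟫ + 2 * ⟪deriv f s, deriv g s⟫ + ⟪deriv (deriv f) s, g s⟫ := by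
  obtain ⟨B, hB⟩ : ∃ B : E →L[ℝ] E →L[ℝ] ℝ, ∀ u v, B u v = ⟪u, v⟫ :=
    ⟨innerSL ℝ, fun _ _ => rfl⟩
  simpa [iteratedDeriv_succ, Nat.antidiagonal_succ, ← add_assoc, hB] using
    iteratedDeriv_bilinear B (n := 2) hf hg

theorem inner_deriv_deriv_of_inner_eventually_eq (hf : ContDiffAt ℝ 2 f s)
    (hg : ContDiffAt ℝ 2 g s) (h : ∀ᶠ y in 𝓝 s, ⟪f y, g y⟫ = c) :
    ⟪f s, deriv (deriv g) s⟫ + 2 * ⟪deriv f s, deriv g s⟫ + ⟪deriv (deriv f) s, g s⟫ = 0 := by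
  have hconst : (fun y => ⟪f y, g y⟫) =ᶠ[𝓝 s] fun _ => c := h
  rw [← deriv_deriv_inner hf hg, hconst.deriv.deriv_eq]
  simp

end InnerProduct

section Cross

theorem inner_eq_coord (u v : E3) : ⟪u, v⟫ = u 0 * v 0 + u 1 * v 1 + u 2 * v 2 := by
  simp [PiLp.inner_apply, Fin.sum_univ_three, mul_comm]

theorem isBilinearMap_cross : IsBilinearMap ℝ cross where
  add_left u u' v := by ext i; fin_cases i <;> simp [cross] <;> ring
  smul_left c u v := by ext i; fin_cases i <;> simp [cross] <;> ring
  add_right u v v' := by ext i; fin_cases i <;> simp [cross] <;> ring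
  smul_right c u v := by ext i; fin_cases i <;> simp [cross] <;> ring

theorem inner_cross_swap (u v w : E3) : ⟪u, cross v w⟫ = -⟪w, cross v u⟫ := by
  simp only [inner_eq_coord, cross, WithLp.equiv_symm_apply_ofLp, Matrix.cons_val]
  ring

theorem inner_cross_cyclic (u v w : E3) : ⟪u, cross v w⟫ = ⟪w, cross u v⟫ := by
  simp only [inner_eq_coord, cross, WithLp.equiv_symm_apply_ofLp, Matrix.cons_val]
  ring

theorem inner_cross_self (u v : E3) : ⟪v, cross u v⟫ = 0 := by
  linarith [inner_cross_swap v u v]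

theorem inner_self_cross (u v : E3) : ⟪u, cross u v⟫ = 0 := by
  rw [inner_cross_cyclic, inner_cross_cyclic, inner_cross_self]

theorem cross_cross (u v w : E3) : cross u (cross v w) = ⟪u, w⟫ • v - ⟪u, v⟫ • w := by
  ext i
  fin_cases i <;> simp [cross, inner_eq_coord] <;> ring

/-- The cross product of `E3` as a continuous bilinear map, which makes the Leibniz rules for
bilinear maps available for it. -/
def crossL : E3 →L[ℝ] E3 →L[ℝ] E3 := isBilinearMap_cross.toContinuousBilinearMap

@[simp]
theorem crossL_apply (u v : E3) : crossL u v = cross u v := rfl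

theorem cross_zero_right (u : E3) : cross u 0 = 0 := map_zero (crossL u)

theorem cross_zero_left (u : E3) : cross 0 u = 0 := by simp [← crossL_apply]

theorem cross_self (u : E3) : cross u u = 0 := by
  ext i
  fin_cases i <;> simp [cross, mul_comm]

theorem hasDerivAt_cross {f g : ℝ → E3} {f' g' : E3} {s : ℝ} (hf : HasDerivAt f f' s)
    (hg : HasDerivAt g g' s) :
    HasDerivAt (fun y => cross (f y) (g y)) (cross (f s) g' + cross f' (g s)) s :=
  crossL.hasDerivAt_of_bilinear (fun _ => hf) fun _ => hg

end Cross

section Frame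

variable {u w : E3}

theorem norm_cross_eq_one (hu : ‖u‖ = 1) (hw : ‖w‖ = 1) (huw : ⟪u, w⟫ = 0) :
    ‖cross u w‖ = 1 := by
  rw [norm_eq_sqrt_real_inner, inner_cross_swap, cross_cross, huw, real_inner_self_eq_norm_sq, hu]
  simp [hw]

theorem orthonormal_cross_frame (hu : ‖u‖ = 1) (hw : ‖w‖ = 1) (huw : ⟪u, w⟫ = 0) :
    Orthonormal ℝ ![u, w, cross u w] := by
  simp [orthonormal_vecCons_iff, Fin.forall_fin_succ, hu, hw, huw, inner_self_cross,
    inner_cross_self, norm_cross_eq_one]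

theorem eq_cross_frame_expansion (hu : ‖u‖ = 1) (hw : ‖w‖ = 1) (huw : ⟪u, w⟫ = 0) (x : E3) :
    x = ⟪u, x⟫ • u + ⟪w, x⟫ • w + ⟪cross u w, x⟫ • cross u w := by
  have hframe := orthonormal_cross_frame hu hw huw
  have hspan := hframe.linearIndependent.span_eq_top_of_card_eq_finrank (by simp)
  simpa [Fin.sum_univ_three] using ((OrthonormalBasis.mk hframe hspan.ge).sum_repr' x).symm

theorem cross_left_eq_of_frame (hu : ‖u‖ = 1) (hw : ‖w‖ = 1) (huw : ⟪u, w⟫ = 0) (x : E3) :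
    cross u x = ⟪w, x⟫ • cross u w - ⟪cross u w, x⟫ • w := by
  have hw_coeff : ⟪w, cross u x⟫ = -⟪cross u w, x⟫ := by
    rw [inner_cross_swap, real_inner_comm]
  have hcross_coeff : ⟪cross u w, cross u x⟫ = ⟪w, x⟫ := by
    rw [inner_cross_swap, cross_cross, huw, real_inner_self_eq_norm_sq, hu]
    simp [real_inner_comm x]
  rw [eq_cross_frame_expansion hu hw huw (cross u x), inner_self_cross, hw_coeff, hcross_coeff]
  module

theorem cross_right_eq_of_frame (hu : ‖u‖ = 1) (hw : ‖w‖ = 1) (huw : ⟪u, w⟫ = 0) (x : E3) :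
    cross w x = ⟪cross u w, x⟫ • u - ⟪u, x⟫ • cross u w := by
  have hu_coeff : ⟪u, cross w x⟫ = ⟪cross u w, x⟫ := by
    rw [inner_cross_cyclic, real_inner_comm]
  have hcross_coeff : ⟪cross u w, cross w x⟫ = -⟪u, x⟫ := by
    rw [inner_cross_swap, cross_cross, real_inner_comm u w, huw, real_inner_self_eq_norm_sq, hw]
    simp [real_inner_comm x]
  rw [eq_cross_frame_expansion hu hw huw (cross w x), inner_self_cross, hu_coeff, hcross_coeff]
  module

theorem smul_cross_frame_single (a b c : ℝ) :
    a • (EuclideanSpace.single 0 1 : E3) + b • EuclideanSpace.single 1 1 +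
        c • cross (EuclideanSpace.single 0 1) (EuclideanSpace.single 1 1) =
      (WithLp.equiv 2 (Fin 3 → ℝ)).symm ![a, b, c] := by
  ext i
  fin_cases i <;> simp [cross]

end Frame

section RuledSurface

variable {v₀ v₁ : ℝ → E3} {s : ℝ}

theorem hasDerivAt_κ₁ (hv₀ : DifferentiableAt ℝ (deriv v₀) s)
    (hv₁ : DifferentiableAt ℝ (deriv v₁) s) :
    HasDerivAt (κ₁ v₀ v₁)
      (⟪deriv v₀ s, deriv (deriv v₁) s⟫ + ⟪deriv (deriv v₀) s, deriv v₁ s⟫) s :=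
  hv₀.hasDerivAt.inner ℝ hv₁.hasDerivAt

theorem κ₁_eq_zero_of_deriv_eq_zero (hv₁s' : deriv v₁ s = 0) : κ₁ v₀ v₁ s = 0 := by
  rw [κ₁, hv₁s', inner_zero_right]

theorem deriv_κ₁_of_deriv_eq_zero (hv₀ : DifferentiableAt ℝ (deriv v₀) s)
    (hv₁ : DifferentiableAt ℝ (deriv v₁) s) (hv₁s' : deriv v₁ s = 0) :
    deriv (κ₁ v₀ v₁) s = ⟪n₀ v₀ s, deriv (deriv v₁) s⟫ := by
  rw [(hasDerivAt_κ₁ hv₀ hv₁).deriv, hv₁s', inner_zero_right, add_zero, n₀]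

theorem deriv_deriv_κ₁_of_deriv_eq_zero (hv₀ : ContDiffAt ℝ 2 (deriv v₀) s)
    (hv₁ : ContDiffAt ℝ 2 (deriv v₁) s) (hv₁s' : deriv v₁ s = 0) :
    deriv (deriv (κ₁ v₀ v₁)) s =
      ⟪n₀ v₀ s, deriv (deriv (deriv v₁)) s⟫ +
        2 * ⟪deriv (deriv v₀) s, deriv (deriv v₁) s⟫ := by
  unfold κ₁ n₀
  rw [deriv_deriv_inner hv₀ hv₁, hv₁s', inner_zero_right, add_zero]

-- The `ε`-part of the dual-number identity `κ² τ = det (v, v', v'')`, where `κ₀ = 1`.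
theorem τ₁_eq_triple_product (hv₀ : DifferentiableAt ℝ (deriv v₀) s)
    (hv₁ : DifferentiableAt ℝ (deriv v₁) s) :
    τ₁ v₀ v₁ s =
      ⟪deriv (deriv v₁) s, t₀ v₀ s⟫ +
        ⟪deriv (deriv v₀) s, cross (v₀ s) (deriv v₁ s) + cross (v₁ s) (deriv v₀ s)⟫ -
        2 * (κ₁ v₀ v₁ s * τ₀ v₀ s) := by
  have hn₁ : deriv (n₁ v₀ v₁) s = deriv (deriv v₁) s -
      (κ₁ v₀ v₁ s • deriv (deriv v₀) s + deriv (κ₁ v₀ v₁) s • deriv v₀ s) :=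
    (hv₁.hasDerivAt.sub
      ((hasDerivAt_κ₁ hv₀ hv₁).differentiableAt.hasDerivAt.smul hv₀.hasDerivAt)).deriv
  have hcross : cross (v₀ s) (n₁ v₀ v₁ s) =
      cross (v₀ s) (deriv v₁ s) - κ₁ v₀ v₁ s • cross (v₀ s) (deriv v₀ s) := by
    simp only [n₁, ← crossL_apply, map_sub, map_smul]
  simp only [τ₁, τ₀, t₁, t₀, show n₀ v₀ = deriv v₀ from rfl, hn₁, hcross, inner_add_right,
    inner_sub_right, inner_sub_left, inner_add_left, real_inner_smul_left, real_inner_smul_right,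
    inner_cross_self]
  ring

theorem τ₁_of_deriv_eq_zero (hv₀ : DifferentiableAt ℝ (deriv v₀) s)
    (hv₁ : DifferentiableAt ℝ (deriv v₁) s) (hv₁s : v₁ s = 0) (hv₁s' : deriv v₁ s = 0) :
    τ₁ v₀ v₁ s = ⟪t₀ v₀ s, deriv (deriv v₁) s⟫ := by
  rw [τ₁_eq_triple_product hv₀ hv₁, κ₁_eq_zero_of_deriv_eq_zero hv₁s', hv₁s, hv₁s', cross_zero_left,
    cross_zero_right, real_inner_comm]
  simp

theorem hasDerivAt_t₀ (hv₀ : DifferentiableAt ℝ v₀ s) (hv₀' : DifferentiableAt ℝ (deriv v₀) s) :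
    HasDerivAt (t₀ v₀) (cross (v₀ s) (deriv (deriv v₀) s)) s :=
  (hasDerivAt_cross hv₀.hasDerivAt hv₀'.hasDerivAt).congr_deriv (by rw [cross_self, add_zero])

theorem deriv_τ₁_of_deriv_eq_zero (hv₀ : ContDiffAt ℝ 3 v₀ s) (hv₁ : ContDiffAt ℝ 3 v₁ s)
    (hv₁s : v₁ s = 0) (hv₁s' : deriv v₁ s = 0) :
    deriv (τ₁ v₀ v₁) s =
      ⟪t₀ v₀ s, deriv (deriv (deriv v₁)) s⟫ - 2 * (deriv (κ₁ v₀ v₁) s * τ₀ v₀ s) := by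
  have hv₀' : ContDiffAt ℝ 2 (deriv v₀) s := hv₀.derivWithin (by norm_num)
  have hv₁' : ContDiffAt ℝ 2 (deriv v₁) s := hv₁.derivWithin (by norm_num)
  have hd₀ := (hv₀.differentiableAt three_ne_zero).hasDerivAt
  have hd₁ := (hv₁.differentiableAt three_ne_zero).hasDerivAt
  have hd₀' := (hv₀'.differentiableAt two_ne_zero).hasDerivAt
  have hd₁' := (hv₁'.differentiableAt two_ne_zero).hasDerivAt
  have hd₀'' := (differentiableAt_deriv_of_contDiffAt hv₀').hasDerivAt
  have hd₁'' := (differentiableAt_deriv_of_contDiffAt hv₁').hasDerivAt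
  have ht₀ := hasDerivAt_t₀ hd₀.differentiableAt hd₀'.differentiableAt
  have hτ₀ : HasDerivAt (τ₀ v₀) _ s := hd₀''.inner ℝ ht₀
  have hmixed : HasDerivAt (fun y => cross (v₀ y) (deriv v₁ y) + cross (v₁ y) (deriv v₀ y))
      (cross (v₀ s) (deriv (deriv v₁) s)) s := by
    simpa [hv₁s, hv₁s', cross_zero_left, cross_zero_right] using
      (hasDerivAt_cross hd₀ hd₁').fun_add (hasDerivAt_cross hd₁ hd₀')
  have hκ₁τ₀ : HasDerivAt (fun y => κ₁ v₀ v₁ y * τ₀ v₀ y) (deriv (κ₁ v₀ v₁) s * τ₀ v₀ s) s := by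
    have hκ₁ := (hasDerivAt_κ₁ hd₀'.differentiableAt hd₁'.differentiableAt).differentiableAt
    simpa [κ₁_eq_zero_of_deriv_eq_zero hv₁s'] using hκ₁.hasDerivAt.fun_mul hτ₀
  have hτ₁ : τ₁ v₀ v₁ =ᶠ[𝓝 s] fun y =>
      ⟪deriv (deriv v₁) y, t₀ v₀ y⟫ +
        ⟪deriv (deriv v₀) y, cross (v₀ y) (deriv v₁ y) + cross (v₁ y) (deriv v₀ y)⟫ -
        2 * (κ₁ v₀ v₁ y * τ₀ v₀ y) := by
    filter_upwards [hv₀'.eventually (by norm_num), hv₁'.eventually (by norm_num)] with y hy₀ hy₁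
    exact τ₁_eq_triple_product (hy₀.differentiableAt two_ne_zero) (hy₁.differentiableAt two_ne_zero)
  rw [hτ₁.deriv_eq, (((hd₁''.inner ℝ ht₀).fun_add (hd₀''.inner ℝ hmixed)).fun_sub
    (hκ₁τ₀.const_mul 2)).deriv, inner_cross_swap, hv₁s, hv₁s', cross_zero_left, cross_zero_right,
    add_zero, inner_zero_right, real_inner_comm (t₀ v₀ s)]
  ring

theorem inner_n₀_eq_zero (hv₀ : DifferentiableAt ℝ v₀ s) (hunit : ∀ᶠ y in 𝓝 s, ‖v₀ y‖ = 1) :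
    ⟪v₀ s, n₀ v₀ s⟫ = 0 :=
  inner_deriv_self_eq_zero_of_norm_eventually_eq hv₀ hunit

theorem deriv_deriv_eq_of_unit_speed (hv₀ : ContDiffAt ℝ 2 v₀ s)
    (hunit : ∀ᶠ y in 𝓝 s, ‖v₀ y‖ = 1) (harc : ∀ᶠ y in 𝓝 s, ‖deriv v₀ y‖ = 1) :
    deriv (deriv v₀) s = -v₀ s + τ₀ v₀ s • t₀ v₀ s := by
  have hv₀_coeff : ⟪v₀ s, deriv (deriv v₀) s⟫ = -1 := by
    have h := inner_deriv_deriv_of_inner_eventually_eq (c := 1) hv₀ hv₀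
      (hunit.mono fun y hy => by simp [hy])
    rw [real_inner_self_eq_norm_sq, harc.self_of_nhds, real_inner_comm (v₀ s)] at h
    linarith
  have hn₀_coeff : ⟪deriv v₀ s, deriv (deriv v₀) s⟫ = 0 :=
    inner_deriv_self_eq_zero_of_norm_eventually_eq (differentiableAt_deriv_of_contDiffAt hv₀) harc
  have ht₀_coeff : ⟪cross (v₀ s) (deriv v₀ s), deriv (deriv v₀) s⟫ = τ₀ v₀ s :=
    real_inner_comm _ _
  rw [eq_cross_frame_expansion hunit.self_of_nhds harc.self_of_nhds
    (inner_n₀_eq_zero (hv₀.differentiableAt two_ne_zero) hunit) (deriv (deriv v₀) s),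
    hv₀_coeff, hn₀_coeff, ht₀_coeff, t₀, n₀]
  module

theorem deriv_r_eq_zero (hv₀ : DifferentiableAt ℝ v₀ s) (hv₁ : DifferentiableAt ℝ v₁ s)
    (hv₁s : v₁ s = 0) (hv₁s' : deriv v₁ s = 0) : deriv (r v₀ v₁) s = 0 := by
  unfold r
  rw [(hasDerivAt_cross hv₀.hasDerivAt hv₁.hasDerivAt).deriv, hv₁s, hv₁s', cross_zero_right,
    cross_zero_right, add_zero]

theorem deriv_deriv_r_eq_cross (hv₀ : ContDiffAt ℝ 2 v₀ s) (hv₁ : ContDiffAt ℝ 2 v₁ s)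
    (hv₁s : v₁ s = 0) (hv₁s' : deriv v₁ s = 0) :
    deriv (deriv (r v₀ v₁)) s = cross (v₀ s) (deriv (deriv v₁) s) := by
  unfold r
  simpa [iteratedDeriv_succ, Nat.antidiagonal_succ, hv₁s, hv₁s', cross_zero_right] using
    iteratedDeriv_bilinear crossL (n := 2) hv₀ hv₁

theorem deriv_deriv_deriv_r_eq_cross (hv₀ : ContDiffAt ℝ 3 v₀ s) (hv₁ : ContDiffAt ℝ 3 v₁ s)
    (hv₁s : v₁ s = 0) (hv₁s' : deriv v₁ s = 0) :
    deriv (deriv (deriv (r v₀ v₁))) s = cross (v₀ s) (deriv (deriv (deriv v₁)) s) +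
      3 • cross (n₀ v₀ s) (deriv (deriv v₁) s) := by
  unfold r n₀
  simpa [iteratedDeriv_succ, Nat.antidiagonal_succ, hv₁s, hv₁s', cross_zero_right] using
    iteratedDeriv_bilinear crossL (n := 3) hv₀ hv₁

theorem deriv_deriv_r_eq_frame (hv₀ : ContDiffAt ℝ 2 v₀ s) (hv₁ : ContDiffAt ℝ 2 v₁ s)
    (hunit : ∀ᶠ y in 𝓝 s, ‖v₀ y‖ = 1) (harc : ‖deriv v₀ s‖ = 1)
    (hv₁s : v₁ s = 0) (hv₁s' : deriv v₁ s = 0) :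
    deriv (deriv (r v₀ v₁)) s =
      deriv (κ₁ v₀ v₁) s • t₀ v₀ s - τ₁ v₀ v₁ s • n₀ v₀ s := by
  have hdiff₀ := differentiableAt_deriv_of_contDiffAt hv₀
  have hdiff₁ := differentiableAt_deriv_of_contDiffAt hv₁
  rw [deriv_deriv_r_eq_cross hv₀ hv₁ hv₁s hv₁s', deriv_κ₁_of_deriv_eq_zero hdiff₀ hdiff₁ hv₁s',
    τ₁_of_deriv_eq_zero hdiff₀ hdiff₁ hv₁s hv₁s']
  exact cross_left_eq_of_frame hunit.self_of_nhds harc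
    (inner_n₀_eq_zero (hv₀.differentiableAt two_ne_zero) hunit) _

theorem deriv_deriv_deriv_r_eq_frame (hv₀ : ContDiffAt ℝ 3 v₀ s) (hv₁ : ContDiffAt ℝ 3 v₁ s)
    (hunit : ∀ᶠ y in 𝓝 s, ‖v₀ y‖ = 1) (horth : ∀ᶠ y in 𝓝 s, ⟪v₀ y, v₁ y⟫ = 0)
    (harc : ∀ᶠ y in 𝓝 s, ‖deriv v₀ y‖ = 1) (hv₁s : v₁ s = 0) (hv₁s' : deriv v₁ s = 0) :
    deriv (deriv (deriv (r v₀ v₁))) s =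
      (3 * τ₁ v₀ v₁ s) • v₀ s -
        (2 * τ₀ v₀ s * deriv (κ₁ v₀ v₁) s + deriv (τ₁ v₀ v₁) s) • n₀ v₀ s +
        (deriv (deriv (κ₁ v₀ v₁)) s - 2 * τ₀ v₀ s * τ₁ v₀ v₁ s) • t₀ v₀ s := by
  have hv₀' : ContDiffAt ℝ 2 (deriv v₀) s := hv₀.derivWithin (by norm_num)
  have hv₁' : ContDiffAt ℝ 2 (deriv v₁) s := hv₁.derivWithin (by norm_num)
  have hτ₁ := τ₁_of_deriv_eq_zero (hv₀'.differentiableAt two_ne_zero)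
    (hv₁'.differentiableAt two_ne_zero) hv₁s hv₁s'
  have hv₀v₁'' : ⟪v₀ s, deriv (deriv v₁) s⟫ = 0 := by
    simpa [hv₁s, hv₁s'] using inner_deriv_deriv_of_inner_eventually_eq
      (hv₀.of_le (by norm_num)) (hv₁.of_le (by norm_num)) horth
  have hv₀''v₁'' : ⟪deriv (deriv v₀) s, deriv (deriv v₁) s⟫ = τ₀ v₀ s * τ₁ v₀ v₁ s := by
    rw [deriv_deriv_eq_of_unit_speed (hv₀.of_le (by norm_num)) hunit harc, inner_add_left,
      inner_neg_left, hv₀v₁'', real_inner_smul_left, ← hτ₁, neg_zero, zero_add]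
  have hn₀v₁''' : ⟪n₀ v₀ s, deriv (deriv (deriv v₁)) s⟫ =
      deriv (deriv (κ₁ v₀ v₁)) s - 2 * τ₀ v₀ s * τ₁ v₀ v₁ s := by
    linarith [deriv_deriv_κ₁_of_deriv_eq_zero hv₀' hv₁' hv₁s']
  have ht₀v₁''' : ⟪t₀ v₀ s, deriv (deriv (deriv v₁)) s⟫ =
      2 * τ₀ v₀ s * deriv (κ₁ v₀ v₁) s + deriv (τ₁ v₀ v₁) s := by
    linarith [deriv_τ₁_of_deriv_eq_zero hv₀ hv₁ hv₁s hv₁s']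
  have hunit₀ : ‖v₀ s‖ = 1 := hunit.self_of_nhds
  have hunit₁ : ‖n₀ v₀ s‖ = 1 := harc.self_of_nhds
  have hperp := inner_n₀_eq_zero (hv₀.differentiableAt three_ne_zero) hunit
  rw [deriv_deriv_deriv_r_eq_cross hv₀ hv₁ hv₁s hv₁s',
    cross_left_eq_of_frame hunit₀ hunit₁ hperp, cross_right_eq_of_frame hunit₀ hunit₁ hperp,
    ← t₀, hn₀v₁''', ht₀v₁''', hv₀v₁'', ← hτ₁]
  module

end RuledSurface

end Ruled

theorem canonical_taylor_expansion_general {v₀ v₁ : ℝ → E3} {s₀ : ℝ}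
    (hv₀ : ContDiffAt ℝ 3 v₀ s₀) (hv₁ : ContDiffAt ℝ 3 v₁ s₀)
    (hunit : ∀ᶠ s in 𝓝 s₀, ‖v₀ s‖ = 1) (horth : ∀ᶠ s in 𝓝 s₀, ⟪v₀ s, v₁ s⟫ = 0)
    (harc : ∀ᶠ s in 𝓝 s₀, ‖deriv v₀ s‖ = 1) (hv₁s₀ : v₁ s₀ = 0) (hv₁s₀' : deriv v₁ s₀ = 0) :
    (fun p : ℝ × ℝ =>
        F v₀ v₁ (s₀ + p.1) p.2 -
          ((p.2 - (1 / 2) * p.2 * p.1 ^ 2 + (τ₁ v₀ v₁ s₀ / 2) * p.1 ^ 3) • v₀ s₀ +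
            (p.2 * p.1 - (τ₁ v₀ v₁ s₀ / 2) * p.1 ^ 2 -
              ((2 * τ₀ v₀ s₀ * deriv (κ₁ v₀ v₁) s₀ + deriv (τ₁ v₀ v₁) s₀) / 6) * p.1 ^ 3) •
                n₀ v₀ s₀ +
            ((deriv (κ₁ v₀ v₁) s₀ / 2) * p.1 ^ 2 + (τ₀ v₀ s₀ / 2) * p.2 * p.1 ^ 2 +
              ((deriv (deriv (κ₁ v₀ v₁)) s₀ - 2 * τ₀ v₀ s₀ * τ₁ v₀ v₁ s₀) / 6) * p.1 ^ 3) •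
                t₀ v₀ s₀)) =o[𝓝 (0 : ℝ × ℝ)]
      fun p : ℝ × ℝ => ‖p‖ ^ 3 := by
  have hv₀two : ContDiffAt ℝ 2 v₀ s₀ := hv₀.of_le (by norm_num)
  have hv₁two : ContDiffAt ℝ 2 v₁ s₀ := hv₁.of_le (by norm_num)
  have hr : ContDiffAt ℝ 3 (r v₀ v₁) s₀ := (crossL.contDiff.contDiffAt.comp s₀ hv₀).clm_apply hv₁
  have hr₀ : r v₀ v₁ s₀ = 0 := by rw [r, hv₁s₀, cross_zero_right]
  have hr' := deriv_r_eq_zero (hv₀.differentiableAt three_ne_zero)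
    (hv₁.differentiableAt three_ne_zero) hv₁s₀ hv₁s₀'
  have hr'' := deriv_deriv_r_eq_frame hv₀two hv₁two hunit harc.self_of_nhds hv₁s₀ hv₁s₀'
  have hr''' := deriv_deriv_deriv_r_eq_frame hv₀ hv₁ hunit horth harc hv₁s₀ hv₁s₀'
  have hv₀'' := deriv_deriv_eq_of_unit_speed hv₀two hunit harc
  refine (taylor_ruled_isLittleO (n := 2) hr hv₀two).congr_left fun p => ?_
  simp only [F, sum_range_succ, range_zero, sum_empty, iteratedDeriv_succ, iteratedDeriv_zero,
    hr₀, hr', hr'', hr''', hv₀'', n₀, Nat.factorial]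
  push_cast
  module

/-- The canonical Taylor expansion of `F` at a normalized singular point: the degree-3
Taylor polynomial of `F` at `(0,0)` is the cubic map `P` built from the invariants. -/
theorem canonical_taylor_expansion
    (I : Set ℝ) (v₀ v₁ : ℝ → E3)
    (hI : IsOpen I) (hI' : I.OrdConnected)
    (hv₀ : ContDiffOn ℝ (⊤ : ℕ∞) v₀ I) (hv₁ : ContDiffOn ℝ (⊤ : ℕ∞) v₁ I)
    (hunit : ∀ s ∈ I, ‖v₀ s‖ = 1) (horth : ∀ s ∈ I, ⟪v₀ s, v₁ s⟫ = 0)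
    (harc : ∀ s ∈ I, ‖deriv v₀ s‖ = 1)
    (h0 : (0 : ℝ) ∈ I)
    (hn₁ : v₀ 0 = EuclideanSpace.single 0 1)
    (hn₂ : deriv v₀ 0 = EuclideanSpace.single 1 1)
    (hn₃ : v₁ 0 = 0) (hn₄ : deriv v₁ 0 = 0) :
    (fun p : ℝ × ℝ =>
        F v₀ v₁ p.1 p.2 -
          (WithLp.equiv 2 (Fin 3 → ℝ)).symm
            ![p.2 - (1 / 2) * p.2 * p.1 ^ 2 + (τ₁ v₀ v₁ 0 / 2) * p.1 ^ 3,
              p.2 * p.1 - (τ₁ v₀ v₁ 0 / 2) * p.1 ^ 2 -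
                ((2 * τ₀ v₀ 0 * deriv (κ₁ v₀ v₁) 0 + deriv (τ₁ v₀ v₁) 0) / 6) * p.1 ^ 3,
              (deriv (κ₁ v₀ v₁) 0 / 2) * p.1 ^ 2 + (τ₀ v₀ 0 / 2) * p.2 * p.1 ^ 2 +
                ((deriv (deriv (κ₁ v₀ v₁)) 0 - 2 * τ₀ v₀ 0 * τ₁ v₀ v₁ 0) / 6) * p.1 ^ 3]) =o[nhds (0 : ℝ × ℝ)]
      fun p : ℝ × ℝ => ‖p‖ ^ 3 := by
  have hmem : ∀ᶠ s in 𝓝 (0 : ℝ), s ∈ I := hI.mem_nhds h0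
  have hexp := canonical_taylor_expansion_general
    ((hv₀.contDiffAt hmem).of_le (WithTop.coe_le_coe.2 le_top))
    ((hv₁.contDiffAt hmem).of_le (WithTop.coe_le_coe.2 le_top))
    (hmem.mono hunit) (hmem.mono horth) (hmem.mono harc) hn₃ hn₄
  exact hexp.congr_left fun p => by rw [zero_add, t₀, n₀, hn₁, hn₂, smul_cross_frame_single]
end
end
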